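/- arXiv:math/0409554 — 2 statements merged into one kernel-verified Lean document; each statement's English description precedes it below -/
import Mathlib

section
/- Fix integers 1 ≤ p ≤ q and k ≥ 0. Then lim_{n→∞} n^{(p²−1)/2} · E^{p(n−p)+k, p}( 1_{λ⊇μ} · H(λ) ) = ( √p · ∏_{j=1}^p (q−j)! ) / ( (2π)^{(p−1)/2} · k! ) · E( (½ Z_{2pq})^k ), where μ = (n−p)^p and H is the strip hook product (both depending on n). Equivalently, E^{p(n−p)+k,p}(1_{λ⊇μ} H(λ)) ∼ c_{p,q,k} · n^{−(p²−1)/2} as n → ∞, with c_{p,q,k} = ( √p ∏_{j=1}^p (q−j)! / (2π)^{(p−1)/2} ) · binom(pq−1+k, k). -/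
open MeasureTheory Filter Real
open scoped BigOperators Topology

noncomputable section

/-- Hook length of the (0-indexed) cell `c` in the Young diagram `μ`. -/
def hookLen (μ : YoungDiagram) (c : ℕ × ℕ) : ℕ :=
  μ.rowLen c.1 + μ.colLen c.2 - c.1 - c.2 - 1

/-- Product of all hook lengths of `μ`. -/
def hookProd (μ : YoungDiagram) : ℕ := ∏ c ∈ μ.cells, hookLen μ c

/-- Number of semistandard Young tableaux of shape `μ` with entries in `{0, …, q-1}`. -/
def numSSYT (μ : YoungDiagram) (q : ℕ) : ℕ :=
  Set.ncard {T : SemistandardYoungTableau μ | ∀ c ∈ μ.cells, T c.1 c.2 < q}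

/-- Number of standard Young tableaux of shape `μ`, via the hook length formula. -/
def fSYT (μ : YoungDiagram) : ℝ := (Nat.factorial μ.card : ℝ) / (hookProd μ : ℝ)

/-- The probability `P^{ℓ,p}` of a partition `μ` of `ℓ`. -/
def Pword (ℓ p : ℕ) (μ : YoungDiagram) : ℝ :=
  fSYT μ * (numSSYT μ p : ℝ) / (p : ℝ) ^ ℓ

/-- The expectation `E^{ℓ,p}` of a function `g` of the partition. -/
def Eword (ℓ p : ℕ) (g : YoungDiagram → ℝ) : ℝ :=
  ∑' μ : YoungDiagram, if μ.card = ℓ then Pword ℓ p μ * g μ else 0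

/-- The expectation `E_{x,p}` with respect to the Poissonized measure `P_{x,p}`. -/
def Epois (x : ℝ) (p : ℕ) (g : YoungDiagram → ℝ) : ℝ :=
  ∑' μ : YoungDiagram,
    Real.exp (-(p * x)) * (p * x) ^ μ.card / (Nat.factorial μ.card : ℝ) *
      Pword μ.card p μ * g μ

/-- Pochhammer symbol `(x)_m = x (x+1) ⋯ (x+m-1)`. -/
def pochRe (x : ℝ) (m : ℕ) : ℝ := ∏ j ∈ Finset.range m, (x + j)

/-- `(x)_κ = ∏_i (x + 1 - i)_{κ_i}` (with `i` 1-indexed). -/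
def pochPart (x : ℝ) (μ : YoungDiagram) : ℝ :=
  ∏ i ∈ Finset.range (μ.colLen 0), pochRe (x - i) (μ.rowLen i)

/-- Strip hook product `H(λ) = ∏_{(i,j) ∈ λ, n-q < j ≤ n-p} h^λ_{ij}` (1-indexed `j`). -/
def Hstrip (n p q : ℕ) (μ : YoungDiagram) : ℕ :=
  ∏ c ∈ μ.cells.filter (fun c => n - q ≤ c.2 ∧ c.2 < n - p), hookLen μ c

/-- The indicator `1_{λ ⊇ (n-p)^p}`. -/
def indSup (n p : ℕ) (μ : YoungDiagram) : ℝ :=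
  if ∀ i < p, n - p ≤ μ.rowLen i then 1 else 0

/-- Vandermonde determinant `Δ_p(x) = ∏_{i<j} (x_i - x_j)`. -/
def vdm {p : ℕ} (x : Fin p → ℝ) : ℝ :=
  ∏ i : Fin p, ∏ j ∈ Finset.Ioi i, (x i - x j)

/-- The `k`-th moment `E((½ Z_m)^k)` of half a chi-square variable with `m`
degrees of freedom, `Z_m = X₁² + ⋯ + X_m²` for iid standard normals. -/
def chiHalfMoment (m k : ℕ) : ℝ :=
  ∫ x : Fin m → ℝ, ((∑ i, x i ^ 2) / 2) ^ k
    ∂(MeasureTheory.Measure.pi fun _ : Fin m => ProbabilityTheory.gaussianReal 0 1)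

namespace StripHook
open scoped ENNReal

/-- indicator -/
def ind (P : Prop) : ℝ≥0∞ := by classical exact if P then 1 else 0

lemma ind_true {P : Prop} (h : P) : ind P = 1 := by simp [ind, h]
lemma ind_false {P : Prop} (h : ¬ P) : ind P = 0 := by simp [ind, h]
lemma ind_and (P Q : Prop) : ind (P ∧ Q) = ind P * ind Q := by
  by_cases hP : P <;> by_cases hQ : Q <;> simp [ind, hP, hQ]
lemma ind_congr {P Q : Prop} (h : P ↔ Q) : ind P = ind Q := by rw [propext h]

/-- shift -/
def shf (κ : ℕ →₀ ℕ) : ℕ →₀ ℕ := κ.comapDomain (· + 1) (by intro a _ b _ h; simpa using h)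

@[simp] lemma shf_apply (κ : ℕ →₀ ℕ) (i : ℕ) : shf κ i = κ (i + 1) := rfl

/-- cons -/
def cns (a : ℕ) (τ : ℕ →₀ ℕ) : ℕ →₀ ℕ :=
  Finsupp.single 0 a + τ.embDomain ⟨(· + 1), by intro a b h; simpa using h⟩

@[simp] lemma cns_zero (a : ℕ) (τ : ℕ →₀ ℕ) : cns a τ 0 = a := by
  simp [cns]
  rw [Finsupp.embDomain_of_notMem_range]; simp

@[simp] lemma cns_succ (a : ℕ) (τ : ℕ →₀ ℕ) (i : ℕ) : cns a τ (i + 1) = τ i := by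
  simp [cns]
  exact Finsupp.embDomain_apply_self ⟨(· + 1), by intro a b h; simpa using h⟩ τ i

def cnsEquiv : (ℕ × (ℕ →₀ ℕ)) ≃ (ℕ →₀ ℕ) where
  toFun x := cns x.1 x.2
  invFun κ := (κ 0, shf κ)
  left_inv x := by ext <;> simp
  right_inv κ := by ext i; cases i <;> simp

lemma degree_cns (a : ℕ) (τ : ℕ →₀ ℕ) : (cns a τ).degree = a + τ.degree := by
  unfold cns
  rw [map_add]
  congr 1
  · simp
  · simp only [Finsupp.degree_apply, Finsupp.support_embDomain, Finset.sum_map]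
    exact Finset.sum_congr rfl fun i _ => Finsupp.embDomain_apply_self _ _ _

lemma degree_shf (κ : ℕ →₀ ℕ) : κ.degree = κ 0 + (shf κ).degree := by
  have := degree_cns (κ 0) (shf κ)
  rwa [show cns (κ 0) (shf κ) = κ from cnsEquiv.right_inv κ] at this

/-- interlacing indicator -/
def IL (ν κ : ℕ →₀ ℕ) : ℝ≥0∞ := ind (ν ≤ κ ∧ shf κ ≤ ν)

/-- GT count -/
def dd : ℕ → (ℕ →₀ ℕ) → ℝ≥0∞
  | 0, κ => ind (κ = 0)
  | q + 1, κ => ∑' ν, IL ν κ * dd q ν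

def SS (φ : ℕ → ℝ≥0∞) : ℕ → ℝ≥0∞ := fun x => ∑' j, φ (x + j)

lemma tsum_ind_le (a : ℕ) (ψ : ℕ → ℝ≥0∞) : ∑' x, ind (a ≤ x) * ψ x = ∑' j, ψ (a + j) := by
  have hinj : Function.Injective (fun j : ℕ => a + j) := fun x y h => by simpa using h
  rw [← hinj.tsum_eq (f := fun x => ind (a ≤ x) * ψ x)]
  · exact tsum_congr fun j => by rw [ind_true (by omega)]; simp
  · intro x hx
    by_contra h
    apply hx
    simp only
    rw [ind_false]; · simp
    intro h'
    exact h ⟨x - a, by simp; omega⟩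

lemma tsum_ind_Icc (a b : ℕ →₀ ℕ) (ψ : (ℕ →₀ ℕ) → ℝ≥0∞) :
    ∑' x, ind (a ≤ x ∧ x ≤ b) * ψ x = ∑ x ∈ Finset.Icc a b, ψ x := by
  rw [tsum_eq_sum (s := Finset.Icc a b)]
  · apply Finset.sum_congr rfl
    intro x hx
    rw [ind_true (Finset.mem_Icc.1 hx)]; simp
  · intro x hx
    rw [ind_false (by simpa using hx)]; simp

lemma local_rule (ν α : ℕ →₀ ℕ) (φ : ℕ → ℝ≥0∞) :
    ∑' κ : ℕ →₀ ℕ, IL ν κ * IL α κ * φ κ.degree =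
    ∑' ρ : ℕ →₀ ℕ, IL ρ ν * IL ρ α * SS φ (α.degree + (ν.degree - ρ.degree)) := by
  set A := α ⊔ ν with hA
  set B := α ⊓ ν with hB
  have hAB : A.degree + B.degree = α.degree + ν.degree := by
    rw [← map_add, ← map_add]
    congr 1
    ext i
    simp [hA, hB]
  have e1 : ∀ κ, IL ν κ * IL α κ = ind (A ≤ κ ∧ shf κ ≤ B) := by
    intro κ
    rw [IL, IL, ← ind_and]
    apply ind_congr
    rw [hA, hB, sup_le_iff, le_inf_iff]; tauto
  have e2 : ∀ ρ, IL ρ ν * IL ρ α = ind (shf A ≤ ρ ∧ ρ ≤ B) := by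
    intro κ
    rw [IL, IL, ← ind_and]
    apply ind_congr
    have : shf A = shf α ⊔ shf ν := by ext i; simp [hA]
    rw [this, hB, sup_le_iff, le_inf_iff]; tauto
  simp_rw [e1, e2]
  rw [tsum_ind_Icc, ← cnsEquiv.tsum_eq, ENNReal.tsum_prod', ENNReal.tsum_comm]
  have e3 : ∀ (τ : ℕ →₀ ℕ), ∑' a, ind (A ≤ cnsEquiv (a, τ) ∧ shf (cnsEquiv (a, τ)) ≤ B) *
      φ (cnsEquiv (a, τ)).degree = ind (shf A ≤ τ ∧ τ ≤ B) * SS φ (A 0 + τ.degree) := by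
    intro τ
    have : ∀ a, ind (A ≤ cnsEquiv (a, τ) ∧ shf (cnsEquiv (a, τ)) ≤ B) =
        ind (shf A ≤ τ ∧ τ ≤ B) * ind (A 0 ≤ a) := by
      intro a
      rw [← ind_and]
      apply ind_congr
      have h1 : shf (cnsEquiv (a, τ)) = τ := by ext i; simp [cnsEquiv]
      rw [h1]
      have h2 : A ≤ cnsEquiv (a, τ) ↔ A 0 ≤ a ∧ shf A ≤ τ := by
        constructor
        · intro h
          exact ⟨by simpa [cnsEquiv] using h 0, fun i => by simpa [cnsEquiv] using h (i + 1)⟩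
        · rintro ⟨h, h'⟩ i
          cases i with
          | zero => simpa [cnsEquiv] using h
          | succ i => simpa [cnsEquiv] using h' i
      rw [h2]; tauto
    simp_rw [this, mul_assoc]
    rw [ENNReal.tsum_mul_left, tsum_ind_le]
    congr 1
    apply tsum_congr
    intro j
    congr 1
    simp only [cnsEquiv, Equiv.coe_fn_mk, degree_cns]; ring
  simp_rw [e3]
  rw [tsum_ind_Icc]
  apply Finset.sum_nbij' (fun τ => shf A + B - τ) (fun τ => shf A + B - τ)
  · intro τ hτ
    rw [Finset.mem_Icc] at hτ ⊢
    constructor <;> intro i <;> have h1 := hτ.1 i <;> have h2 := hτ.2 i <;>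
      simp only [shf_apply, Finsupp.tsub_apply, Finsupp.add_apply] at * <;> omega
  · intro τ hτ
    rw [Finset.mem_Icc] at hτ ⊢
    constructor <;> intro i <;> have h1 := hτ.1 i <;> have h2 := hτ.2 i <;>
      simp only [shf_apply, Finsupp.tsub_apply, Finsupp.add_apply] at * <;> omega
  · intro τ hτ
    rw [Finset.mem_Icc] at hτ 
    ext i
    have h1 := hτ.1 i ; have h2 := hτ.2 i 
    simp only [shf_apply, Finsupp.tsub_apply, Finsupp.add_apply] at * ; omega
  · intro τ hτ
    rw [Finset.mem_Icc] at hτ 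
    ext i
    have h1 := hτ.1 i ; have h2 := hτ.2 i 
    simp only [shf_apply, Finsupp.tsub_apply, Finsupp.add_apply] at * ; omega
  · intro τ hτ
    rw [Finset.mem_Icc] at hτ 
    congr 1
    have h3 : (shf A + B - τ).degree + τ.degree = (shf A).degree + B.degree := by
      rw [← map_add, ← map_add]
      congr 1
      ext i
      have h1 := hτ.1 i ; have h2 := hτ.2 i 
      simp only [shf_apply, Finsupp.tsub_apply, Finsupp.add_apply] at * ; omega
    have h4 := degree_shf A
    have h5 : (shf A + B - τ).degree ≤ ν.degree := by
      apply Finsupp.degree_mono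
      have h6 : B ≤ ν := inf_le_right
      refine le_trans ?_ h6
      clear h6
      intro i
      change _ ≤ B i
      have h1 := hτ.1 i ; have h2 := hτ.2 i 
      simp only [shf_apply, Finsupp.tsub_apply, Finsupp.add_apply] at * ; omega
    omega

lemma pieri (q : ℕ) : ∀ (ν : ℕ →₀ ℕ) (φ : ℕ → ℝ≥0∞),
    ∑' κ, IL ν κ * dd q κ * φ κ.degree = dd q ν * SS^[q] φ ν.degree := by
  induction q with
  | zero =>
    intro ν φ
    rw [tsum_eq_single 0]
    · simp only [dd, IL, Function.iterate_zero, id]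
      by_cases h : ν = 0
      · subst h
        rw [ind_true ⟨le_rfl, fun i => by simp⟩, ind_true rfl]; simp [ind]
      · rw [ind_false, ind_false h]; · simp
        simp [h]
    · intro κ hκ
      simp [dd, ind_false hκ]
  | succ q ih =>
    intro ν φ
    calc ∑' κ, IL ν κ * dd (q+1) κ * φ κ.degree
        = ∑' κ, ∑' α, dd q α * (IL ν κ * IL α κ * φ κ.degree) := by
          refine tsum_congr fun κ => ?_
          rw [dd, ← ENNReal.tsum_mul_left, ← ENNReal.tsum_mul_right]
          exact tsum_congr fun α => by ring
      _ = ∑' α, dd q α * ∑' κ, (IL ν κ * IL α κ * φ κ.degree) := by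
          rw [ENNReal.tsum_comm]
          exact tsum_congr fun α => ENNReal.tsum_mul_left
      _ = ∑' α, ∑' ρ, IL ρ ν * (IL ρ α * dd q α * SS φ (α.degree + (ν.degree - ρ.degree))) := by
          refine tsum_congr fun α => ?_
          rw [local_rule, ← ENNReal.tsum_mul_left]
          exact tsum_congr fun α => by ring
      _ = ∑' ρ, IL ρ ν * ∑' α, IL ρ α * dd q α * (fun x => SS φ (x + (ν.degree - ρ.degree))) α.degree := by
          rw [ENNReal.tsum_comm]
          exact tsum_congr fun α => ENNReal.tsum_mul_left
      _ = ∑' ρ, IL ρ ν * dd q ρ * SS^[q+1] φ ν.degree := by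
          refine tsum_congr fun ρ => ?_
          rw [ih ρ (fun x => SS φ (x + (ν.degree - ρ.degree)))]
          by_cases h : ρ ≤ ν ∧ shf ν ≤ ρ
          · rw [mul_assoc]
            congr 2
            have hs : ∀ (c : ℕ) (m : ℕ) (ψ : ℕ → ℝ≥0∞) (x : ℕ), SS^[m] (fun x => ψ (x + c)) x = SS^[m] ψ (x + c) := by
              intro c m
              induction m with
              | zero => intro ψ x; rfl
              | succ m ihm =>
                intro ψ x
                rw [Function.iterate_succ_apply, Function.iterate_succ_apply]
                rw [← ihm]
                have : (SS fun x => ψ (x + c)) = fun x => SS ψ (x + c) := by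
                  funext y
                  simp only [SS]
                  exact tsum_congr fun j => by congr 1; ring
                rw [this]
            rw [hs, Function.iterate_succ_apply]
            have := Finsupp.degree_mono h.1
            rw [Nat.add_sub_cancel' this]
          · simp [IL, ind_false h]
      _ = _ := by
          rw [ENNReal.tsum_mul_right]; rfl

lemma dd_zero_shape (q : ℕ) : dd q 0 = 1 := by
  induction q with
  | zero => simp [dd, ind]
  | succ q ih =>
    rw [dd, tsum_eq_single 0]
    · rw [IL, ind_true, ih]; · simp
      exact ⟨le_rfl, fun i => by simp⟩
    · intro ν hν
      rw [IL, ind_false]; · simp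
      simp [hν]

lemma cauchy (q : ℕ) (p : ℕ) : ∀ φ : ℕ → ℝ≥0∞,
    ∑' κ, dd p κ * dd q κ * φ κ.degree = SS^[p * q] φ 0 := by
  induction p with
  | zero =>
    intro φ
    rw [tsum_eq_single 0]
    · simp [dd_zero_shape]
    · intro κ hκ
      simp [dd, ind_false hκ]
  | succ p ih =>
    intro φ
    calc ∑' κ, dd (p+1) κ * dd q κ * φ κ.degree
        = ∑' κ, ∑' ν, dd p ν * (IL ν κ * dd q κ * φ κ.degree) := by
          refine tsum_congr fun κ => ?_
          rw [dd, ← ENNReal.tsum_mul_right, ← ENNReal.tsum_mul_right]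
          exact tsum_congr fun α => by ring
      _ = ∑' ν, dd p ν * dd q ν * SS^[q] φ ν.degree := by
          rw [ENNReal.tsum_comm]
          refine tsum_congr fun α => ?_
          rw [ENNReal.tsum_mul_left, pieri, mul_assoc]
      _ = _ := by
          rw [ih, ← Function.iterate_add_apply, Nat.succ_mul]

lemma SS_iter_single (k : ℕ) (N : ℕ) : ∀ x, SS^[N] (fun y => ind (y = k)) x =
    if x ≤ k then (Nat.multichoose N (k - x) : ℝ≥0∞) else 0 := by
  induction N with
  | zero =>
    intro x
    simp only [Function.iterate_zero, id]
    by_cases h : x = k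
    · subst h; simp [ind]
    · rw [ind_false h]
      split_ifs with h1
      · obtain ⟨c, hc⟩ : ∃ c, k - x = c + 1 := ⟨k - x - 1, by omega⟩
        rw [hc]; simp
      · rfl
  | succ N ih =>
    intro x
    rw [Function.iterate_succ_apply', SS]
    simp_rw [ih]
    split_ifs with h
    · obtain ⟨c, rfl⟩ := Nat.exists_eq_add_of_le h
      rw [tsum_eq_sum (s := Finset.range (c + 1))]
      · rw [Nat.add_sub_cancel_left]
        have : ∀ c, ∑ j ∈ Finset.range (c+1), Nat.multichoose N (c - j) = Nat.multichoose (N+1) c := by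
          intro c
          induction c with
          | zero => simp
          | succ c ihc =>
            rw [Finset.sum_range_succ', Nat.multichoose_succ_succ, ← ihc]
            simp; ring
        rw [← this]
        push_cast
        apply Finset.sum_congr rfl
        intro j hj
        rw [Finset.mem_range] at hj
        rw [if_pos (by omega)]
        congr 2; omega
      · intro j hj
        rw [Finset.mem_range] at hj
        rw [if_neg (by omega)]
    · simp only [ENNReal.tsum_eq_zero]
      intro j; rw [if_neg (by omega)]

theorem cauchy_count (p q k : ℕ) :
    ∑' κ : ℕ →₀ ℕ, dd p κ * dd q κ * ind (κ.degree = k) = (Nat.multichoose (p * q) k : ℝ≥0∞) := by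
  rw [cauchy q p (fun y => ind (y = k)), SS_iter_single]; simp

def DD (q : ℕ) (l : Fin q → ℕ) : ℤ :=
  (Matrix.of fun i j : Fin q => (-1 : ℤ) ^ (j : ℕ) * ((l i).choose j : ℤ)).det

lemma sum_Ico_choose (a b j : ℕ) (h : a ≤ b) :
    ∑ m ∈ Finset.Ico a b, (m.choose j : ℤ) = (b.choose (j+1) : ℤ) - (a.choose (j+1) : ℤ) := by
  induction b, h using Nat.le_induction with
  | base => simp
  | succ b hab ih =>
    rw [Finset.sum_Ico_succ_top hab, ih, Nat.choose_succ_succ]; push_cast; ring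

lemma DD_rec (q : ℕ) (l : Fin (q + 1) → ℕ) (hl : ∀ i : Fin q, l i.succ ≤ l i.castSucc) :
    ∑ m ∈ Fintype.piFinset (fun i : Fin q => Finset.Ico (l i.succ) (l i.castSucc)), DD q m
      = DD (q + 1) l := by
  have h1 := (Matrix.detRowAlternating (n := Fin q) (R := ℤ)).toMultilinearMap.map_sum_finset
    (A := fun i : Fin q => Finset.Ico (l i.succ) (l i.castSucc))
    (g := fun _ m => fun j : Fin q => (-1 : ℤ) ^ (j : ℕ) * (m.choose j : ℤ))
  have h2 : ∑ m ∈ Fintype.piFinset (fun i : Fin q => Finset.Ico (l i.succ) (l i.castSucc)), DD q m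
      = Matrix.det (fun i : Fin q => ∑ m ∈ Finset.Ico (l i.succ) (l i.castSucc),
         fun j : Fin q => (-1 : ℤ) ^ (j : ℕ) * (m.choose j : ℤ)) := h1.symm
  rw [h2]
  rw [DD]
  set B : Matrix (Fin (q+1)) (Fin (q+1)) ℤ := Matrix.of fun i j =>
    Fin.cases (motive := fun _ => ℤ) ((-1 : ℤ) ^ (j : ℕ) * ((l 0).choose j : ℤ))
      (fun i => (-1 : ℤ) ^ (j : ℕ) * ((l i.succ).choose j : ℤ) -
        (-1 : ℤ) ^ (j : ℕ) * ((l i.castSucc).choose j : ℤ)) i with hB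
  have hB0 : ∀ j, B 0 j = (-1 : ℤ) ^ (j : ℕ) * ((l 0).choose j : ℤ) := fun j => rfl
  have hBs : ∀ (i : Fin q) j, B i.succ j = (-1 : ℤ) ^ (j : ℕ) * ((l i.succ).choose j : ℤ) -
        (-1 : ℤ) ^ (j : ℕ) * ((l i.castSucc).choose j : ℤ) := fun i j => rfl
  clear_value B
  rw [Matrix.det_eq_of_forall_row_eq_smul_add_pred (B := B) (fun _ => 1)]
  · rw [Matrix.det_succ_column_zero, Fin.sum_univ_succ, Finset.sum_eq_zero]
    · rw [hB0]
      simp only [Fin.val_zero, pow_zero, Nat.choose_zero_right, one_mul, add_zero, Nat.cast_one]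
      congr 1
      ext i j
      rw [Matrix.submatrix_apply, Fin.succAbove_zero, hBs, Finset.sum_apply]
      rw [← Finset.mul_sum, sum_Ico_choose _ _ _ (hl i)]
      simp [pow_succ]
      ring
    · intro i _
      rw [hBs]; simp
  · intro j; simp [hB0]
  · intro i j; simp [hBs]

lemma DD_vdm (q : ℕ) (l : Fin q → ℕ) :
    (∏ i : Fin q, (Nat.factorial i : ℤ)) * DD q l = ∏ i : Fin q, ∏ j ∈ Finset.Ioi i, ((l i : ℤ) - l j) := by
  have h1 : ∏ i : Fin q, ∏ j ∈ Finset.Ioi i, ((l i : ℤ) - l j) =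
      (Matrix.vandermonde (fun i => -(l i : ℤ))).det := by
    rw [Matrix.det_vandermonde]
    refine Finset.prod_congr rfl fun i _ => Finset.prod_congr rfl fun j _ => by ring
  have h2 : (Matrix.vandermonde (fun i => -(l i : ℤ))).det =
      (∏ j : Fin q, (-1 : ℤ) ^ (j : ℕ)) * (Matrix.vandermonde (fun i => (l i : ℤ))).det := by
    rw [← Matrix.det_mul_row]
    congr 1
    ext i j
    simp [Matrix.vandermonde_apply, neg_pow (l i : ℤ)]
  have h3 : (Matrix.vandermonde (fun i => (l i : ℤ))).det =
      (∏ i : Fin q, (Nat.factorial i : ℤ)) * (Matrix.of fun i j : Fin q => ((l i).choose j : ℤ)).det := by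
    rw [Matrix.det_eval_matrixOfPolynomials_eq_det_vandermonde _ (fun i => descPochhammer ℤ i)
      (fun i => descPochhammer_natDegree ℤ i) (fun i => monic_descPochhammer ℤ i), ← Matrix.det_mul_row]
    congr 1
    ext i j
    simp only [Matrix.of_apply]
    rw [descPochhammer_eval_eq_descFactorial ℤ _ _, Nat.descFactorial_eq_factorial_mul_choose]
    push_cast; rfl
  have h4 : DD q l = (∏ j : Fin q, (-1 : ℤ) ^ (j : ℕ)) *
      (Matrix.of fun i j : Fin q => ((l i).choose j : ℤ)).det := by
    rw [DD, ← Matrix.det_mul_row]; rfl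
  rw [h1, h2, h3, h4]; ring

lemma dd_support (q : ℕ) : ∀ κ : ℕ →₀ ℕ, dd q κ ≠ 0 → ∀ i, q ≤ i → κ i = 0 := by
  induction q with
  | zero =>
    intro κ h i _
    by_contra hi
    apply h
    rw [dd, ind_false]
    rintro rfl; simp at hi
  | succ q ih =>
    intro κ h i hi
    rw [dd, Ne, ENNReal.tsum_eq_zero] at h
    push Not at h
    obtain ⟨ν, hν⟩ := h
    have h1 : IL ν κ ≠ 0 := left_ne_zero_of_mul hν
    have h2 : dd q ν ≠ 0 := right_ne_zero_of_mul hν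
    have h3 : shf κ ≤ ν := by
      by_contra h3
      apply h1
      rw [IL, ind_false]; tauto
    obtain ⟨i, rfl⟩ : ∃ i', i = i' + 1 := ⟨i - 1, by omega⟩
    have := ih ν h2 i (by omega)
    have h4 := h3 i
    rw [shf_apply] at h4
    omega

/-- zero extension -/
def zext (q : ℕ) (f : Fin q → ℕ) : ℕ →₀ ℕ :=
  Finsupp.onFinset (Finset.range q) (fun i => if h : i < q then f ⟨i, h⟩ else 0) (by
    intro i hi
    by_contra h
    simp at h
    apply hi
    rw [dif_neg (by omega)])

lemma zext_lt (q : ℕ) (f : Fin q → ℕ) (i : ℕ) (h : i < q) : zext q f i = f ⟨i, h⟩ := by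
  simp [zext, h]
lemma zext_ge (q : ℕ) (f : Fin q → ℕ) (i : ℕ) (h : q ≤ i) : zext q f i = 0 := by
  simp [zext, h]

lemma weyl (q : ℕ) : ∀ κ : ℕ →₀ ℕ, (∀ i, κ (i+1) ≤ κ i) → (∀ i, q ≤ i → κ i = 0) →
    ∃ N : ℕ, dd q κ = N ∧ (N : ℤ) = DD q (fun i => κ i + (q - 1 - i)) := by
  induction q with
  | zero =>
    intro κ h1 h2
    refine ⟨1, ?_, ?_⟩
    · rw [dd, ind_true]; · simp
      ext i; exact h2 i (by omega)
    · simp [DD]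
  | succ q ih =>
    intro κ h1 h2
    have key : dd (q+1) κ = ∑ m ∈ Fintype.piFinset (fun i : Fin q =>
        Finset.Ico (κ (i+1) + (q - 1 - i)) (κ i + (q - i))), dd q (zext q fun i => m i - (q - 1 - i)) := by
      have : dd (q+1) κ = ∑ ν ∈ Finset.Icc (shf κ) κ, dd q ν := by
        rw [dd, ← tsum_ind_Icc]
        exact tsum_congr fun ν => by rw [IL, and_comm]
      classical
      rw [this, ← Finset.sum_filter_of_ne (p := fun ν : ℕ →₀ ℕ => ∀ i, q ≤ i → ν i = 0)]
      · symm
        apply Finset.sum_nbij' (fun m => zext q fun i => m i - (q - 1 - i))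
          (fun ν => fun i : Fin q => ν i + (q - 1 - i))
        · intro m hm
          simp only [Fintype.mem_piFinset, Finset.mem_Ico] at hm
          rw [Finset.mem_filter, Finset.mem_Icc]
          refine ⟨⟨?_, ?_⟩, ?_⟩
          · intro i
            rw [shf_apply]
            by_cases hi : i < q
            · rw [zext_lt _ _ _ hi]
              have := hm ⟨i, hi⟩
              simp only at this ⊢
              omega
            · rw [h2 _ (by omega)]; omega
          · intro i
            by_cases hi : i < q
            · rw [zext_lt _ _ _ hi]
              have := hm ⟨i, hi⟩
              simp only at this ⊢
              omega
            · rw [zext_ge _ _ _ (by omega)]; omega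
          · intro i hi
            exact zext_ge _ _ _ hi
        · intro ν hν
          rw [Finset.mem_filter, Finset.mem_Icc] at hν
          simp only [Fintype.mem_piFinset, Finset.mem_Ico]
          intro i
          have h3 := hν.1.1 i
          have h4 := hν.1.2 i
          rw [shf_apply] at h3
          have := i.2
          omega
        · intro m hm
          simp only [Fintype.mem_piFinset, Finset.mem_Ico] at hm
          funext i
          have := hm i
          rw [zext_lt _ _ _ i.2]
          simp only [Fin.eta]
          omega
        · intro ν hν
          rw [Finset.mem_filter] at hν
          ext i
          by_cases hi : i < q
          · rw [zext_lt _ _ _ hi]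
            simp
          · rw [zext_ge _ _ _ (by omega), hν.2 i (by omega)]
        · intro m hm; rfl
      · intro ν _ h
        exact dd_support q ν h
    have hex : ∀ m ∈ Fintype.piFinset (fun i : Fin q =>
        Finset.Ico (κ (i+1) + (q - 1 - i)) (κ i + (q - i))),
        ∃ N : ℕ, dd q (zext q fun i => m i - (q - 1 - i)) = N ∧ (N : ℤ) = DD q m := by
      intro m hm
      simp only [Fintype.mem_piFinset, Finset.mem_Ico] at hm
      obtain ⟨N, hN1, hN2⟩ := ih (zext q fun i => m i - (q - 1 - i)) (by
        intro i
        by_cases hi : i + 1 < q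
        · rw [zext_lt _ _ _ hi, zext_lt _ _ _ (by omega)]
          have a1 := hm ⟨i, by omega⟩
          have a2 := hm ⟨i+1, by omega⟩
          simp only at a1 a2 ⊢
          omega
        · rw [zext_ge _ _ _ (by omega)]; omega) (fun i hi => zext_ge _ _ _ hi)
      refine ⟨N, hN1, ?_⟩
      rw [hN2]
      congr 1
      funext i
      rw [zext_lt _ _ _ i.2]
      have := hm i
      simp only [Fin.eta]
      omega
    choose! N hN using hex
    refine ⟨∑ m ∈ Fintype.piFinset (fun i : Fin q =>
        Finset.Ico (κ (i+1) + (q - 1 - i)) (κ i + (q - i))), N m, ?_, ?_⟩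
    · rw [key]; push_cast
      exact Finset.sum_congr rfl fun m hm => (hN m hm).1
    · rw [← DD_rec]
      · push_cast
        rw [Finset.sum_congr rfl fun m hm => (hN m hm).2]
        apply Finset.sum_congr _ fun _ _ => rfl
        congr 1
        funext i
        simp only [Fin.val_succ, Fin.val_castSucc]
        congr 1
        omega
      · intro i
        have := h1 i
        simp only [Fin.val_succ, Fin.val_castSucc]
        omega

/-- tableaux of shape `κ` -/
def TS (q : ℕ) (κ : ℕ →₀ ℕ) : Set (ℕ → ℕ → ℕ) :=
  {T | (∀ i j1 j2, j1 < j2 → j2 < κ i → T i j1 ≤ T i j2) ∧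
    (∀ i1 i2 j, i1 < i2 → j < κ i2 → T i1 j < T i2 j) ∧
    (∀ i j, ¬ j < κ i → T i j = 0) ∧ (∀ i j, j < κ i → T i j < q)}

lemma anti_le (κ : ℕ →₀ ℕ) (h : ∀ i, κ (i+1) ≤ κ i) {a b : ℕ} (hab : a ≤ b) : κ b ≤ κ a :=
  antitone_nat_of_succ_le h hab

def ext (q : ℕ) (κ ν : ℕ →₀ ℕ) (T : ℕ → ℕ → ℕ) : ℕ → ℕ → ℕ := fun i j =>
  if j < ν i then T i j else if j < κ i then q else 0

lemma ext_mem (q : ℕ) (κ ν : ℕ →₀ ℕ) (hκ : ∀ i, κ (i+1) ≤ κ i) (h : ν ≤ κ ∧ shf κ ≤ ν)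
    (T : ℕ → ℕ → ℕ) (hT : T ∈ TS q ν) : ext q κ ν T ∈ TS (q + 1) κ := by
  obtain ⟨t1, t2, t3, t4⟩ := hT
  have hν : ∀ i, ν (i+1) ≤ ν i := fun i => (h.1 (i+1)).trans (h.2 i)
  refine ⟨?_, ?_, ?_, ?_⟩
  · intro i j1 j2 h12 hj
    unfold ext
    have := t1 i j1 j2 h12
    have := t4 i j1
    split_ifs <;> omega
  · intro i1 i2 j h12 hj
    have a1 := anti_le ν hν h12.le
    have a2 := anti_le κ hκ (show i1 + 1 ≤ i2 from h12)
    have a3 := h.2 i1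
    rw [shf_apply] at a3
    unfold ext
    rw [if_pos (show j < ν i1 by omega)]
    have a4 := t4 i1 j (by omega)
    have a5 := t2 i1 i2 j h12
    split_ifs <;> grind
  · intro i j hj
    have := h.1 i
    unfold ext
    rw [if_neg (by omega), if_neg hj]
  · intro i j hj
    unfold ext
    have := t4 i j
    split_ifs <;> grind

lemma ext_lt_iff (q : ℕ) (κ ν : ℕ →₀ ℕ) (h : ν ≤ κ)
    (T : ℕ → ℕ → ℕ) (hT : T ∈ TS q ν) (i j : ℕ) : (j < κ i ∧ ext q κ ν T i j < q) ↔ j < ν i := by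
  have := hT.2.2.2 i j
  have := h i
  unfold ext
  split_ifs <;> grind

lemma ext_inj (q : ℕ) (κ ν ν' : ℕ →₀ ℕ) (h : ν ≤ κ) (h' : ν' ≤ κ)
    (T T' : ℕ → ℕ → ℕ) (hT : T ∈ TS q ν) (hT' : T' ∈ TS q ν')
    (he : ext q κ ν T = ext q κ ν' T') : ν = ν' ∧ T = T' := by
  have hν : ν = ν' := by
    ext i
    have : ∀ j, j < ν i ↔ j < ν' i := fun j => by
      rw [← ext_lt_iff q κ ν h T hT, ← ext_lt_iff q κ ν' h' T' hT', he]
    have a := this (ν i)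
    have b := this (ν' i)
    omega
  subst hν
  refine ⟨rfl, ?_⟩
  funext i j
  have := congrFun (congrFun he i) j
  unfold ext at this
  have a := hT.2.2.1 i j
  have b := hT'.2.2.1 i j
  split_ifs at this <;> grind

lemma ext_surj (q : ℕ) (κ : ℕ →₀ ℕ) (hκ : ∀ i, κ (i+1) ≤ κ i)
    (T : ℕ → ℕ → ℕ) (hT : T ∈ TS (q+1) κ) :
    ∃ ν, (ν ≤ κ ∧ shf κ ≤ ν) ∧ ∃ T' ∈ TS q ν, ext q κ ν T' = T := by
  obtain ⟨t1, t2, t3, t4⟩ := hT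
  have hex : ∀ i, ∃ n, ∀ j, j < n ↔ (j < κ i ∧ T i j < q) := by
    intro i
    classical
    by_cases hh : ∃ j, ¬ (j < κ i ∧ T i j < q)
    · refine ⟨Nat.find hh, fun j => ⟨fun hj => ?_, fun hj => ?_⟩⟩
      · have := Nat.find_min hh hj
        tauto
      · by_contra hc
        have h1 := Nat.find_spec hh
        set n := Nat.find hh
        rcases eq_or_lt_of_le (not_lt.1 hc) with e | e
        · rw [e] at h1; exact h1 hj
        · have := t1 i n j e hj.1
          apply h1
          omega
    · push Not at hh
      exact absurd (hh (κ i)).1 (lt_irrefl _)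
  choose n hn using hex
  have hle : ∀ i, n i ≤ κ i := by
    intro i
    by_contra hc
    have := (hn i (κ i)).1 (by omega)
    omega
  set ν : ℕ →₀ ℕ := Finsupp.onFinset κ.support n (by
    intro i hi
    have := hle i
    rw [Finsupp.mem_support_iff]; omega) with hν
  have hνa : ∀ i, ν i = n i := fun i => rfl
  refine ⟨ν, ⟨fun i => hle i, fun i => ?_⟩, fun i j => if j < n i then T i j else 0, ?_, ?_⟩
  · rw [shf_apply, hνa]
    by_contra hc
    have a1 := t2 i (i+1) (n i) (by omega) (by omega)
    have a2 := t4 (i+1) (n i) (by omega)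
    have a3 : n i < κ i := by
      have := hκ i
      omega
    have := (hn i (n i)).2 ⟨a3, by omega⟩
    omega
  · refine ⟨?_, ?_, ?_, ?_⟩
    · intro i j1 j2 h12 hj
      rw [hνa] at hj
      simp only
      rw [if_pos hj, if_pos (by omega)]
      exact t1 i j1 j2 h12 (((hn i j2).1 hj).1)
    · intro i1 i2 j h12 hj
      rw [hνa] at hj
      have a := (hn i2 j).1 hj
      have b := t2 i1 i2 j h12 a.1
      simp only
      rw [if_pos hj]
      split_ifs
      · exact b
      · omega
    · intro i j hj
      rw [hνa] at hj
      simp [hj]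
    · intro i j hj
      rw [hνa] at hj
      simp only [if_pos hj]
      exact ((hn i j).1 hj).2
  · funext i j
    simp only [ext, hνa]
    have := hn i j
    have := t4 i j
    have := t3 i j
    split_ifs <;> grind

lemma TS_count (q : ℕ) : ∀ κ : ℕ →₀ ℕ, (∀ i, κ (i+1) ≤ κ i) →
    ∑' _ : TS q κ, (1 : ℝ≥0∞) = dd q κ := by
  induction q with
  | zero =>
    intro κ hκ
    rw [dd]
    by_cases h : κ = 0
    · subst h
      have : TS 0 0 = {fun _ _ => 0} := by
        ext T
        simp only [TS, Set.mem_ofPred_eq, Set.mem_singleton_iff, Finsupp.coe_zero, Pi.zero_apply]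
        constructor
        · rintro ⟨_, _, h, _⟩
          funext i j
          exact h i j (by simp)
        · rintro rfl; simp
      rw [this, ind_true rfl]
      simp
    · rw [ind_false h]
      have : TS 0 κ = ∅ := by
        ext T
        simp only [Set.mem_empty_iff_false, iff_false]
        intro hT
        apply h
        ext i
        by_contra hi
        have := hT.2.2.2 i 0 (Nat.pos_of_ne_zero hi)
        omega
      rw [this]; simp
  | succ q ih =>
    intro κ hκ
    have e : (Σ ν : {ν : ℕ →₀ ℕ // ν ≤ κ ∧ shf κ ≤ ν}, TS q ν.1) ≃ TS (q+1) κ :=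
      Equiv.ofBijective (fun x => ⟨ext q κ x.1.1 x.2.1, ext_mem q κ x.1.1 hκ x.1.2 _ x.2.2⟩) (by
        constructor
        · rintro ⟨⟨ν, h⟩, ⟨T, hT⟩⟩ ⟨⟨ν', h'⟩, ⟨T', hT'⟩⟩ he
          simp only [Subtype.mk.injEq] at he
          obtain ⟨rfl, rfl⟩ := ext_inj q κ ν ν' h.1 h'.1 T T' hT hT' he
          rfl
        · rintro ⟨T, hT⟩
          obtain ⟨ν, h, T', hT', he⟩ := ext_surj q κ hκ T hT
          exact ⟨⟨⟨ν, h⟩, ⟨T', hT'⟩⟩, Subtype.ext he⟩)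
    rw [← e.tsum_eq, ENNReal.tsum_sigma', dd]
    have : ∀ ν : {ν : ℕ →₀ ℕ // ν ≤ κ ∧ shf κ ≤ ν}, ∑' _ : TS q ν.1, (1 : ℝ≥0∞) = dd q ν.1 :=
      fun ν => ih ν.1 fun i => (ν.2.1 (i+1)).trans (ν.2.2 i)
    simp_rw [this]
    rw [show (∑' ν : {ν : ℕ →₀ ℕ // ν ≤ κ ∧ shf κ ≤ ν}, dd q ν.1) =
      ∑' ν, Set.indicator {ν : ℕ →₀ ℕ | ν ≤ κ ∧ shf κ ≤ ν} (dd q) ν from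
      tsum_subtype {ν : ℕ →₀ ℕ | ν ≤ κ ∧ shf κ ≤ ν} (dd q)]
    refine tsum_congr fun ν => ?_
    by_cases h : ν ≤ κ ∧ shf κ ≤ ν
    · rw [Set.indicator_of_mem (by exact h), IL, ind_true h, one_mul]
    · rw [Set.indicator_of_notMem (by exact h), IL, ind_false h, zero_mul]

def rl (μ : YoungDiagram) : ℕ →₀ ℕ :=
  Finsupp.onFinset (Finset.range (μ.colLen 0)) μ.rowLen (by
    intro i hi
    rw [Finset.mem_range, ← YoungDiagram.mem_iff_lt_colLen, YoungDiagram.mem_iff_lt_rowLen]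
    omega)

lemma prodIccFac (n : ℕ) : ∏ x ∈ Finset.Icc 1 n, x = Nat.factorial n := by
  induction n with
  | zero => simp
  | succ n ih => rw [Finset.prod_Icc_succ_top (by omega), ih, Nat.factorial_succ, mul_comm]

lemma rl_apply (μ : YoungDiagram) (i : ℕ) : rl μ i = μ.rowLen i := rfl

lemma rl_anti (μ : YoungDiagram) (i : ℕ) : rl μ (i+1) ≤ rl μ i := μ.rowLen_anti _ _ (by omega)

lemma yd_ext {μ ν : YoungDiagram} (h : ∀ i, μ.rowLen i = ν.rowLen i) : μ = ν := by
  ext ⟨i, j⟩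
  rw [YoungDiagram.mem_cells, YoungDiagram.mem_cells, YoungDiagram.mem_iff_lt_rowLen,
    YoungDiagram.mem_iff_lt_rowLen, h]

lemma numSSYT_dd (μ : YoungDiagram) (q : ℕ) : dd q (rl μ) = (numSSYT μ q : ℝ≥0∞) := by
  have himg : TS q (rl μ) = (fun T : SemistandardYoungTableau μ => (T.entry)) ''
      {T : SemistandardYoungTableau μ | ∀ c ∈ μ.cells, T c.1 c.2 < q} := by
    ext T
    constructor
    · rintro ⟨t1, t2, t3, t4⟩
      refine ⟨⟨T, ?_, ?_, ?_⟩, ?_, rfl⟩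
      · intro i j1 j2 h12 h
        exact t1 i j1 j2 h12 (YoungDiagram.mem_iff_lt_rowLen.1 h)
      · intro i j1 j2 h12 h
        exact t2 i j1 j2 h12 (YoungDiagram.mem_iff_lt_rowLen.1 h)
      · intro i j h
        exact t3 i j (fun h' => h (YoungDiagram.mem_iff_lt_rowLen.2 h'))
      · rintro ⟨i, j⟩ h
        exact t4 i j (YoungDiagram.mem_iff_lt_rowLen.1 ((YoungDiagram.mem_cells _).1 h))
    · rintro ⟨T, hT, rfl⟩
      refine ⟨?_, ?_, ?_, ?_⟩
      · intro i j1 j2 h12 h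
        exact T.row_weak' h12 (YoungDiagram.mem_iff_lt_rowLen.2 h)
      · intro i j1 j2 h12 h
        exact T.col_strict' h12 (YoungDiagram.mem_iff_lt_rowLen.2 h)
      · intro i j h
        exact T.zeros' (fun h' => h (YoungDiagram.mem_iff_lt_rowLen.1 h'))
      · intro i j h
        exact hT (i, j) ((YoungDiagram.mem_cells _).2 (YoungDiagram.mem_iff_lt_rowLen.2 h))
  have hinj : Function.Injective (fun T : SemistandardYoungTableau μ => (T.entry)) := by
    intro T T' h
    exact SemistandardYoungTableau.ext fun i j => congrFun (congrFun h i) j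
  have h1 := TS_count q (rl μ) (rl_anti μ)
  have hfin : dd q (rl μ) ≠ ⊤ := by
    by_cases h0 : dd q (rl μ) = 0
    · rw [h0]; simp
    · obtain ⟨N, hN, _⟩ := weyl q (rl μ) (rl_anti μ) (dd_support q _ h0)
      rw [hN]; simp
  rw [ENNReal.tsum_set_one, himg, hinj.encard_image] at h1
  rw [← h1] at hfin ⊢
  unfold numSSYT
  have h2 : ({T : SemistandardYoungTableau μ | ∀ c ∈ μ.cells, T c.1 c.2 < q}).Finite := by
    rw [← Set.encard_ne_top_iff]
    intro h; rw [h] at hfin; simp at hfin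
  rw [← h2.cast_ncard_eq]
  simp

lemma numSSYT_support (μ : YoungDiagram) (q : ℕ) (h : numSSYT μ q ≠ 0) (i : ℕ) (hi : q ≤ i) :
    μ.rowLen i = 0 := by
  rw [← rl_apply]
  refine dd_support q (rl μ) ?_ i hi
  rw [numSSYT_dd]; exact_mod_cast h

lemma rowLen_zero_ge (μ : YoungDiagram) (q : ℕ) (h : μ.rowLen q = 0) (i : ℕ) (hi : q ≤ i) :
    μ.rowLen i = 0 := by
  have := μ.rowLen_anti _ _ hi
  omega

lemma numSSYT_vdm (μ : YoungDiagram) (q : ℕ) (h : μ.rowLen q = 0) :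
    (∏ i : Fin q, (Nat.factorial i : ℤ)) * (numSSYT μ q : ℤ) =
      ∏ i : Fin q, ∏ j ∈ Finset.Ioi i, (((μ.rowLen i + (q - 1 - i) : ℕ) : ℤ) - (μ.rowLen j + (q - 1 - j) : ℕ)) := by
  obtain ⟨N, h1, h2⟩ := weyl q (rl μ) (rl_anti μ) (rowLen_zero_ge μ q h)
  rw [numSSYT_dd] at h1
  have h3 : numSSYT μ q = N := by exact_mod_cast h1
  rw [h3, h2, DD_vdm]
  rfl

lemma numSSYT_shift (μ ν : YoungDiagram) (q N : ℕ) (h : μ.rowLen q = 0) (h' : ν.rowLen q = 0)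
    (hs : ∀ i < q, μ.rowLen i = N + ν.rowLen i) : numSSYT μ q = numSSYT ν q := by
  have h1 := numSSYT_vdm μ q h
  have h2 := numSSYT_vdm ν q h'
  have : (∏ i : Fin q, (Nat.factorial i : ℤ)) ≠ 0 := by
    rw [Finset.prod_ne_zero_iff]
    intro i _; exact_mod_cast Nat.factorial_ne_zero _
  have h3 : (∏ i : Fin q, (Nat.factorial i : ℤ)) * (numSSYT μ q : ℤ) =
      (∏ i : Fin q, (Nat.factorial i : ℤ)) * (numSSYT ν q : ℤ) := by
    rw [h1, h2]
    refine Finset.prod_congr rfl fun i _ => Finset.prod_congr rfl fun j _ => ?_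
    rw [hs i i.2, hs j j.2]; push_cast; ring
  exact_mod_cast mul_left_cancel₀ this h3

lemma hook_row (μ : YoungDiagram) (q : ℕ) (h : μ.rowLen q = 0) (i : ℕ) (hi : i < q) :
    (∏ j ∈ Finset.range (μ.rowLen i), hookLen μ (i, j)) *
      ∏ i' ∈ Finset.Ioo i q, ((μ.rowLen i + (q - 1 - i)) - (μ.rowLen i' + (q - 1 - i'))) =
    Nat.factorial (μ.rowLen i + (q - 1 - i)) := by
  have hcol : ∀ a b, a < μ.colLen b ↔ b < μ.rowLen a := fun a b => by
    rw [← YoungDiagram.mem_iff_lt_colLen, YoungDiagram.mem_iff_lt_rowLen]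
  have hcq : ∀ b, μ.colLen b ≤ q := by
    intro b
    by_contra hc
    have := (hcol q b).1 (by omega)
    omega
  have hanti := μ.rowLen_anti
  have hcanti := μ.colLen_anti
  set f : ℕ → ℕ := fun j => hookLen μ (i, j) with hf
  set g : ℕ → ℕ := fun i' => ((μ.rowLen i + (q - 1 - i)) - (μ.rowLen i' + (q - 1 - i'))) with hg
  have hfi : Set.InjOn f (Finset.range (μ.rowLen i)) := by
    intro a ha b hb hab
    simp only [Finset.coe_range, Set.mem_Iio] at ha hb
    simp only [hf, hookLen] at hab
    have h1 := (hcol i a).2 ha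
    have h2 := (hcol i b).2 hb
    rcases lt_trichotomy a b with hlt | hlt | hlt
    · have := hcanti a b hlt.le; omega
    · exact hlt
    · have := hcanti b a hlt.le; omega
  have hgi : Set.InjOn g (Finset.Ioo i q) := by
    intro a ha b hb hab
    simp only [Finset.coe_Ioo, Set.mem_Ioo] at ha hb
    simp only [hg] at hab
    have := hanti i a (by omega)
    have := hanti i b (by omega)
    rcases lt_trichotomy a b with hlt | hlt | hlt
    · have := hanti a b hlt.le; omega
    · exact hlt
    · have := hanti b a hlt.le; omega
  have hdisj : Disjoint ((Finset.range (μ.rowLen i)).image f) ((Finset.Ioo i q).image g) := by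
    rw [Finset.disjoint_left]
    intro x hx hx'
    simp only [Finset.mem_image, Finset.mem_range, Finset.mem_Ioo] at hx hx'
    obtain ⟨j, hj, rfl⟩ := hx
    obtain ⟨i', hi', he⟩ := hx'
    simp only [hf, hg, hookLen] at he
    have h1 := (hcol i j).2 hj
    have h2 := hcol i' j
    have h3 := hanti i i' (by omega)
    by_cases hc : i' < μ.colLen j
    · have := h2.1 hc; omega
    · have : ¬ j < μ.rowLen i' := fun h => hc (h2.2 h)
      omega
  have hunion : (Finset.range (μ.rowLen i)).image f ∪ (Finset.Ioo i q).image g =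
      Finset.Icc 1 (μ.rowLen i + (q - 1 - i)) := by
    apply Finset.eq_of_subset_of_card_le
    · intro x hx
      simp only [Finset.mem_union, Finset.mem_image, Finset.mem_range, Finset.mem_Ioo] at hx
      rw [Finset.mem_Icc]
      rcases hx with ⟨j, hj, rfl⟩ | ⟨i', hi', rfl⟩
      · have h1 := (hcol i j).2 hj
        have := hcq j
        simp only [hf, hookLen]
        omega
      · have h3 := hanti i i' (by omega)
        simp only [hg]; omega
    · rw [Finset.card_union_of_disjoint hdisj, Finset.card_image_of_injOn hfi,
        Finset.card_image_of_injOn hgi]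
      simp; omega
  rw [← prodIccFac, ← hunion, Finset.prod_union hdisj,
    Finset.prod_image hfi, Finset.prod_image hgi]

lemma hookProd_rows (μ : YoungDiagram) (q : ℕ) (h : μ.rowLen q = 0) :
    hookProd μ = ∏ i ∈ Finset.range q, ∏ j ∈ Finset.range (μ.rowLen i), hookLen μ (i, j) := by
  unfold hookProd
  apply Finset.prod_finset_product
  rintro ⟨i, j⟩
  rw [YoungDiagram.mem_cells, YoungDiagram.mem_iff_lt_rowLen, Finset.mem_range, Finset.mem_range]
  constructor
  · intro hj
    refine ⟨?_, hj⟩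
    by_contra hc
    have := rowLen_zero_ge μ q h i (by omega)
    omega
  · exact fun h => h.2

theorem hook_content (μ : YoungDiagram) (q : ℕ) (h : μ.rowLen q = 0) :
    numSSYT μ q * hookProd μ * ∏ i ∈ Finset.range q, Nat.factorial i =
      ∏ i ∈ Finset.range q, Nat.factorial (μ.rowLen i + (q - 1 - i)) := by
  have h1 := numSSYT_vdm μ q h
  have h2 : ∏ i : Fin q, ∏ j ∈ Finset.Ioi i, (((μ.rowLen i + (q - 1 - i) : ℕ) : ℤ) - (μ.rowLen j + (q - 1 - j) : ℕ))
     = ((∏ i ∈ Finset.range q, ∏ i' ∈ Finset.Ioo i q, ((μ.rowLen i + (q - 1 - i)) - (μ.rowLen i' + (q - 1 - i'))) : ℕ) : ℤ) := by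
    rw [← Fin.prod_univ_eq_prod_range (fun i => ∏ i' ∈ Finset.Ioo i q, ((μ.rowLen i + (q - 1 - i)) - (μ.rowLen i' + (q - 1 - i'))))]
    rw [Nat.cast_prod]
    refine Finset.prod_congr rfl fun i _ => ?_
    have : Finset.Ioo (i : ℕ) q = (Finset.Ioi i).map Fin.valEmbedding := by
      ext x
      simp only [Finset.mem_Ioo, Finset.mem_map, Finset.mem_Ioi, Fin.valEmbedding_apply]
      constructor
      · rintro ⟨a, b⟩; exact ⟨⟨x, b⟩, a, rfl⟩
      · rintro ⟨a, ha, rfl⟩; exact ⟨ha, a.2⟩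
    rw [this, Finset.prod_map, Nat.cast_prod]
    refine Finset.prod_congr rfl fun j hj => ?_
    rw [Finset.mem_Ioi] at hj
    have hj' : (i : ℕ) < j := hj
    have := μ.rowLen_anti i j hj'.le
    simp only [Fin.valEmbedding_apply]
    rw [Nat.cast_sub (by omega)]
  rw [h2] at h1
  have h3 : (∏ i ∈ Finset.range q, Nat.factorial i) * numSSYT μ q =
      ∏ i ∈ Finset.range q, ∏ i' ∈ Finset.Ioo i q, ((μ.rowLen i + (q - 1 - i)) - (μ.rowLen i' + (q - 1 - i'))) := by
    rw [← Fin.prod_univ_eq_prod_range]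
    exact_mod_cast h1
  calc numSSYT μ q * hookProd μ * ∏ i ∈ Finset.range q, Nat.factorial i
      = hookProd μ * ((∏ i ∈ Finset.range q, Nat.factorial i) * numSSYT μ q) := by ring
    _ = _ := by
      rw [h3, hookProd_rows μ q h, ← Finset.prod_mul_distrib]
      exact Finset.prod_congr rfl fun i hi => hook_row μ q h i (Finset.mem_range.1 hi)

lemma card_rl (μ : YoungDiagram) : μ.card = (rl μ).degree := by
  rw [YoungDiagram.card, Finset.card_eq_sum_ones, Finsupp.degree_apply]
  rw [Finset.sum_finset_product (s := (rl μ).support) (t := fun i => Finset.range (μ.rowLen i))]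
  · simp [rl_apply]
  · rintro ⟨i, j⟩
    rw [YoungDiagram.mem_cells, YoungDiagram.mem_iff_lt_rowLen, Finset.mem_range, Finsupp.mem_support_iff, rl_apply]
    simp only
    omega

def yd (κ : ℕ →₀ ℕ) (h : ∀ i, κ (i+1) ≤ κ i) : YoungDiagram where
  cells := (κ.support ×ˢ Finset.range (κ 0)).filter (fun c => c.2 < κ c.1)
  isLowerSet := by
    rintro ⟨a, b⟩ ⟨c, d⟩ ⟨h1, h2⟩ hm
    simp only [Finset.coe_filter, Finset.mem_product, Finsupp.mem_support_iff, Finset.mem_range, Set.mem_ofPred_eq] at *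
    have a1 := anti_le κ h h1
    have a2 := anti_le κ h (Nat.zero_le c)
    omega

lemma yd_rowLen (κ : ℕ →₀ ℕ) (h : ∀ i, κ (i+1) ≤ κ i) (i : ℕ) : (yd κ h).rowLen i = κ i := by
  have : ∀ j, j < (yd κ h).rowLen i ↔ j < κ i := by
    intro j
    rw [← YoungDiagram.mem_iff_lt_rowLen, ← YoungDiagram.mem_cells]
    simp only [yd, Finset.mem_filter, Finset.mem_product, Finsupp.mem_support_iff, Finset.mem_range]
    have a2 := anti_le κ h (Nat.zero_le i)
    omega
  have a := this ((yd κ h).rowLen i)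
  have b := this (κ i)
  omega

lemma rl_yd (κ : ℕ →₀ ℕ) (h : ∀ i, κ (i+1) ≤ κ i) : rl (yd κ h) = κ := by
  ext i; rw [rl_apply, yd_rowLen]

lemma strip_row (c N r : ℕ) (h : r ≤ N) :
    (∏ j ∈ Finset.Ico (N - r) N, (c + (N - j))) * Nat.factorial c = Nat.factorial (c + r) := by
  induction r with
  | zero => simp
  | succ r ih =>
    have : Finset.Ico (N - (r+1)) N = insert (N - (r+1)) (Finset.Ico (N - r) N) := by
      ext x; simp only [Finset.mem_Ico, Finset.mem_insert]; omega
    rw [this, Finset.prod_insert (by rw [Finset.mem_Ico]; omega), mul_assoc, ih (by omega), ← add_assoc, Nat.factorial_succ]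
    congr 1; omega

lemma strip_formula (n p q : ℕ) (hp : 1 ≤ p) (hpq : p ≤ q) (hn : q ≤ n) (μ ν : YoungDiagram)
    (h : μ.rowLen p = 0) (hs : ∀ i < p, μ.rowLen i = (n - p) + ν.rowLen i) :
    Hstrip n p q μ * ∏ i ∈ Finset.range p, Nat.factorial (ν.rowLen i + (p - 1 - i)) =
      ∏ i ∈ Finset.range p, Nat.factorial (ν.rowLen i + (q - 1 - i)) := by
  have e : Hstrip n p q μ = ∏ i ∈ Finset.range p, ∏ j ∈ Finset.Ico (n - q) (n - p), hookLen μ (i, j) := by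
    unfold Hstrip
    apply Finset.prod_finset_product
    rintro ⟨i, j⟩
    rw [Finset.mem_filter, YoungDiagram.mem_cells, YoungDiagram.mem_iff_lt_rowLen, Finset.mem_range, Finset.mem_Ico]
    simp only
    by_cases hi : i < p
    · have := hs i hi
      omega
    · have := rowLen_zero_ge μ p h i (by omega)
      omega
  rw [e, ← Finset.prod_mul_distrib]
  refine Finset.prod_congr rfl fun i hi => ?_
  rw [Finset.mem_range] at hi
  have h1 := strip_row (ν.rowLen i + (p - 1 - i)) (n - p) (q - p) (by omega)
  rw [show n - p - (q - p) = n - q by omega,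
    show ν.rowLen i + (p - 1 - i) + (q - p) = ν.rowLen i + (q - 1 - i) by omega] at h1
  rw [← h1]
  congr 1
  refine Finset.prod_congr rfl fun j hj => ?_
  rw [Finset.mem_Ico] at hj
  have hc : μ.colLen j = p := by
    have : ∀ a, a < μ.colLen j ↔ a < p := by
      intro a
      rw [← YoungDiagram.mem_iff_lt_colLen, YoungDiagram.mem_iff_lt_rowLen]
      by_cases ha : a < p
      · have := hs a ha
        omega
      · have := rowLen_zero_ge μ p h a (by omega)
        omega
    have a := this (μ.colLen j)
    have b := this p
    omega
  have := hs i hi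
  simp only [hookLen, hc]
  omega

lemma term_formula (n p q k ℓ : ℕ) (hp : 1 ≤ p) (hpq : p ≤ q) (hn : q ≤ n) (μ ν : YoungDiagram)
    (h : μ.rowLen p = 0) (h' : ν.rowLen p = 0) (hs : ∀ i < p, μ.rowLen i = (n - p) + ν.rowLen i)
    (hc : μ.card = ℓ) :
    Pword ℓ p μ * (indSup n p μ * (Hstrip n p q μ : ℝ)) =
      ((Nat.factorial ℓ : ℝ) / ((p : ℝ) ^ ℓ *
        ∏ i ∈ Finset.range p, (Nat.factorial (n - p + ν.rowLen i + (p - 1 - i)) : ℝ))) *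
      ((numSSYT ν p : ℝ) * (numSSYT ν q : ℝ) * ∏ i ∈ Finset.range p, (Nat.factorial (q - 1 - i) : ℝ)) := by
  have hq : ν.rowLen q = 0 := rowLen_zero_ge ν p h' q hpq
  have A1 := hook_content μ p h
  have A2 := hook_content ν p h'
  have A3 := hook_content ν q hq
  have A4 := strip_formula n p q hp hpq hn μ ν h hs
  have A5 := numSSYT_shift μ ν p (n-p) h h' hs
  rw [A5] at A1
  have A6 : ∏ i ∈ Finset.range p, Nat.factorial (μ.rowLen i + (p - 1 - i)) =
      ∏ i ∈ Finset.range p, Nat.factorial (n - p + ν.rowLen i + (p - 1 - i)) :=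
    Finset.prod_congr rfl fun i hi => by rw [hs i (Finset.mem_range.1 hi)]
  rw [A6] at A1
  obtain ⟨r, rfl⟩ := Nat.exists_eq_add_of_le hpq
  have A7 : ∏ i ∈ Finset.range (p + r), Nat.factorial i =
     (∏ i ∈ Finset.range p, Nat.factorial (p + r - 1 - i)) *
      ∏ i ∈ Finset.range r, Nat.factorial (p + r - 1 - (p + i)) := by
    rw [← Finset.prod_range_add, Finset.prod_range_reflect]
  rw [A7, Finset.prod_range_add] at A3
  have A8 : ∏ i ∈ Finset.range r, Nat.factorial (ν.rowLen (p + i) + (p + r - 1 - (p + i))) =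
      ∏ i ∈ Finset.range r, Nat.factorial (p + r - 1 - (p + i)) :=
    Finset.prod_congr rfl fun i hi => by rw [rowLen_zero_ge ν p h' (p+i) (by omega)]; simp
  rw [A8] at A3
  have A9 : indSup n p μ = 1 := by
    rw [indSup, if_pos]
    intro i hi
    rw [hs i hi]; omega
  have hX : 0 < ∏ i ∈ Finset.range p, Nat.factorial (n - p + ν.rowLen i + (p - 1 - i)) :=
    Finset.prod_pos fun i _ => Nat.factorial_pos _
  have hY : 0 < ∏ i ∈ Finset.range p, Nat.factorial (ν.rowLen i + (p - 1 - i)) :=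
    Finset.prod_pos fun i _ => Nat.factorial_pos _
  have hT : 0 < ∏ i ∈ Finset.range r, Nat.factorial (p + r - 1 - (p + i)) :=
    Finset.prod_pos fun i _ => Nat.factorial_pos _
  rw [A9, one_mul, Pword, fSYT, hc, A5]
  have hX' : (∏ i ∈ Finset.range p, (Nat.factorial (n - p + ν.rowLen i + (p - 1 - i)) : ℝ)) =
    ((∏ i ∈ Finset.range p, Nat.factorial (n - p + ν.rowLen i + (p - 1 - i)) : ℕ) : ℝ) := by push_cast; rfl
  have hR' : (∏ i ∈ Finset.range p, (Nat.factorial (p + r - 1 - i) : ℝ)) =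
    ((∏ i ∈ Finset.range p, Nat.factorial (p + r - 1 - i) : ℕ) : ℝ) := by push_cast; rfl
  rw [hX', hR']
  generalize (∏ i ∈ Finset.range p, Nat.factorial (n - p + ν.rowLen i + (p - 1 - i))) = X at *
  generalize (∏ i ∈ Finset.range p, Nat.factorial (ν.rowLen i + (p - 1 - i))) = Y at *
  generalize (∏ i ∈ Finset.range r, Nat.factorial (p + r - 1 - (p + i))) = T at *
  generalize (∏ i ∈ Finset.range p, Nat.factorial (ν.rowLen i + (p + r - 1 - i))) = W at *
  generalize (∏ i ∈ Finset.range p, Nat.factorial (p + r - 1 - i)) = R at *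
  generalize (∏ i ∈ Finset.range p, Nat.factorial i) = sf at *
  generalize numSSYT ν p = a at *
  generalize numSSYT ν (p + r) = b at *
  generalize Hstrip n p (p + r) μ = Hs at *
  generalize hookProd μ = hm at *
  generalize hookProd ν = hn at *
  have hpp : (0 : ℝ) < (p : ℝ) ^ ℓ := by positivity
  have B3 : b * hn * R = W := by
    apply Nat.eq_of_mul_eq_mul_right hT
    rw [← A3]; ring
  have hn0 : hn ≠ 0 := by rintro rfl; simp at A2; omega
  have B4 : a * sf * Hs = b * R := by
    apply Nat.eq_of_mul_eq_mul_right (Nat.pos_of_ne_zero hn0)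
    calc a * sf * Hs * hn = Hs * (a * hn * sf) := by ring
      _ = b * hn * R := by rw [A2, A4, B3]
      _ = _ := by ring
  have hm0 : hm ≠ 0 := by rintro rfl; simp at A1; omega
  have C1 : (a : ℝ) * hm * sf = X := by exact_mod_cast A1
  have C2 : (a : ℝ) * sf * Hs = b * R := by exact_mod_cast B4
  have hm0' : (hm : ℝ) ≠ 0 := by exact_mod_cast hm0
  have hX0' : (X : ℝ) ≠ 0 := by exact_mod_cast hX.ne'
  rw [mul_assoc (a : ℝ), ← C2]
  field_simp
  rw [← C1]; ring

lemma dd_anti (p : ℕ) (hp : 1 ≤ p) (κ : ℕ →₀ ℕ) (h : dd p κ ≠ 0) (i : ℕ) : κ (i+1) ≤ κ i := by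
  obtain ⟨p, rfl⟩ : ∃ p', p = p' + 1 := ⟨p - 1, by omega⟩
  rw [dd, Ne, ENNReal.tsum_eq_zero] at h
  push Not at h
  obtain ⟨ν, hν⟩ := h
  have h1 : IL ν κ ≠ 0 := left_ne_zero_of_mul hν
  by_contra hc
  apply h1
  rw [IL, ind_false]
  rintro ⟨h2, h3⟩
  exact hc ((h3 i).trans (h2 i))

/-- index set of partitions -/
def KK (p k : ℕ) : Finset (ℕ →₀ ℕ) := by
  classical exact
  (Finset.Icc 0 (zext p fun _ => k)).filter (fun κ => (∀ i, κ (i+1) ≤ κ i) ∧ κ.degree = k)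

lemma mem_KK (p k : ℕ) (κ : ℕ →₀ ℕ) : κ ∈ KK p k ↔
    (∀ i, κ (i+1) ≤ κ i) ∧ (∀ i, p ≤ i → κ i = 0) ∧ κ.degree = k := by
  classical
  unfold KK
  rw [Finset.mem_filter, Finset.mem_Icc]
  constructor
  · rintro ⟨⟨_, h1⟩, h2, h3⟩
    refine ⟨h2, fun i hi => ?_, h3⟩
    have := h1 i
    rw [zext_ge _ _ _ hi] at this
    omega
  · rintro ⟨h1, h2, h3⟩
    refine ⟨⟨by simp, fun i => ?_⟩, h1, h3⟩
    by_cases hi : i < p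
    · rw [zext_lt _ _ _ hi, ← h3]
      exact Finsupp.le_degree i κ
    · rw [h2 i (by omega)]; omega

def ydd (κ : ℕ →₀ ℕ) : YoungDiagram := by
  classical exact if h : ∀ i, κ (i+1) ≤ κ i then yd κ h else ⊥

lemma ydd_rowLen (κ : ℕ →₀ ℕ) (h : ∀ i, κ (i+1) ≤ κ i) (i : ℕ) : (ydd κ).rowLen i = κ i := by
  rw [ydd, dif_pos h, yd_rowLen]

lemma rl_ydd (κ : ℕ →₀ ℕ) (h : ∀ i, κ (i+1) ≤ κ i) : rl (ydd κ) = κ := by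
  ext i; rw [rl_apply, ydd_rowLen κ h]

lemma sum_KK (p q k : ℕ) (hp : 1 ≤ p) :
    ∑ κ ∈ KK p k, numSSYT (ydd κ) p * numSSYT (ydd κ) q = Nat.multichoose (p * q) k := by
  have h := cauchy_count p q k
  rw [tsum_eq_sum (s := KK p k)] at h
  · have h2 : ∀ κ ∈ KK p k, dd p κ * dd q κ * ind (κ.degree = k) =
        ((numSSYT (ydd κ) p * numSSYT (ydd κ) q : ℕ) : ℝ≥0∞) := by
      intro κ hκ
      rw [mem_KK] at hκ
      push_cast
      rw [← numSSYT_dd, ← numSSYT_dd, rl_ydd κ hκ.1, ind_true hκ.2.2, mul_one]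
    rw [Finset.sum_congr rfl h2] at h
    exact_mod_cast h
  · intro κ hκ
    by_contra hc
    have h1 := right_ne_zero_of_mul hc
    have h2 := left_ne_zero_of_mul (left_ne_zero_of_mul hc)
    apply hκ
    rw [mem_KK]
    refine ⟨dd_anti p hp κ h2, dd_support p κ h2, ?_⟩
    by_contra hd
    exact h1 (ind_false hd)

theorem Eword_eq (n p q k : ℕ) (hp : 1 ≤ p) (hpq : p ≤ q) (hn : q ≤ n) :
    Eword (p * (n - p) + k) p (fun lam => indSup n p lam * (Hstrip n p q lam : ℝ)) =
    ∑ κ ∈ KK p k, ((Nat.factorial (p * (n - p) + k) : ℝ) / ((p : ℝ) ^ (p * (n - p) + k) *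
        ∏ i ∈ Finset.range p, (Nat.factorial (n - p + κ i + (p - 1 - i)) : ℝ))) *
      ((numSSYT (ydd κ) p : ℝ) * (numSSYT (ydd κ) q : ℝ) *
        ∏ i ∈ Finset.range p, (Nat.factorial (q - 1 - i) : ℝ)) := by
  classical
  set c : ℕ →₀ ℕ := zext p (fun _ => n - p) with hc
  have hcd : c.degree = p * (n - p) := by
    rw [Finsupp.degree_apply, Finset.sum_subset (s₂ := Finset.range p)]
    · rw [Finset.sum_congr rfl (g := fun _ => n - p)]
      · simp
      · intro i hi; exact zext_lt _ _ _ (Finset.mem_range.1 hi)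
    · intro i hi
      rw [Finset.mem_range]
      by_contra h
      rw [Finsupp.mem_support_iff] at hi
      exact hi (zext_ge _ _ _ (by omega))
    · intro i _ hi
      simpa using hi
  have hca : ∀ i, c (i+1) ≤ c i := by
    intro i
    by_cases h : i + 1 < p
    · rw [hc, zext_lt _ _ _ h, zext_lt _ _ _ (by omega)]
    · rw [hc, zext_ge _ _ _ (by omega)]; omega
  have hka : ∀ κ ∈ KK p k, ∀ i, (c + κ) (i+1) ≤ (c + κ) i := by
    intro κ hκ i
    rw [mem_KK] at hκ
    have := hca i
    have := hκ.1 i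
    simp only [Finsupp.add_apply]; omega
  unfold Eword
  rw [tsum_eq_sum (s := (KK p k).image (fun κ => ydd (c + κ)))]
  · rw [Finset.sum_image]
    · refine Finset.sum_congr rfl fun κ hκ => ?_
      have hκ' := (mem_KK p k κ).1 hκ
      have hcard : (ydd (c + κ)).card = p * (n - p) + k := by
        rw [card_rl, rl_ydd _ (hka κ hκ), map_add, hcd, hκ'.2.2]
      rw [if_pos hcard]
      rw [term_formula n p q k _ hp hpq hn (ydd (c + κ)) (ydd κ) _ _ _ hcard]
      · simp_rw [ydd_rowLen κ hκ'.1]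
      · rw [ydd_rowLen _ (hka κ hκ), Finsupp.add_apply, hκ'.2.1 p le_rfl, hc, zext_ge _ _ _ le_rfl]
      · rw [ydd_rowLen _ hκ'.1, hκ'.2.1 p le_rfl]
      · intro i hi
        rw [ydd_rowLen _ (hka κ hκ), ydd_rowLen _ hκ'.1, Finsupp.add_apply, hc, zext_lt _ _ _ hi]
    · intro κ hκ κ' hκ' he
      have := congrArg rl he
      simp only at this
      rw [rl_ydd _ (hka κ hκ), rl_ydd _ (hka κ' hκ')] at this
      exact add_left_cancel this
  · intro μ hμ
    by_contra hne
    apply hμ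
    have hcard : μ.card = p * (n - p) + k := by
      by_contra h
      rw [if_neg h] at hne
      exact hne rfl
    rw [if_pos hcard] at hne
    have h1 := left_ne_zero_of_mul hne
    have h2 := left_ne_zero_of_mul (right_ne_zero_of_mul hne)
    have h3 : numSSYT μ p ≠ 0 := by
      intro h; apply h1; rw [Pword, h]; simp
    have h4 : ∀ i < p, n - p ≤ μ.rowLen i := by
      by_contra h; apply h2; rw [indSup, if_neg h]
    have h5 := numSSYT_support μ p h3
    have hle : c ≤ rl μ := by
      intro i
      by_cases hi : i < p
      · rw [hc, zext_lt _ _ _ hi]; exact h4 i hi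
      · rw [hc, zext_ge _ _ _ (by omega)]; omega
    rw [Finset.mem_image]
    refine ⟨rl μ - c, ?_, ?_⟩
    · rw [mem_KK]
      refine ⟨?_, ?_, ?_⟩
      · intro i
        simp only [Finsupp.tsub_apply]
        have := rl_anti μ i
        by_cases hi : i + 1 < p
        · rw [hc, zext_lt _ _ _ hi, zext_lt _ _ _ (by omega)]; omega
        · rw [rl_apply μ (i+1), h5 (i+1) (by omega)]; omega
      · intro i hi
        rw [Finsupp.tsub_apply, rl_apply, h5 i hi]; omega
      · have : (rl μ - c).degree + c.degree = (rl μ).degree := by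
          rw [← map_add, tsub_add_cancel_of_le hle]
        rw [← card_rl, hcard, hcd] at this
        omega
    · rw [add_tsub_cancel_of_le hle]
      apply yd_ext
      intro i
      rw [ydd_rowLen _ (rl_anti μ), rl_apply]

lemma fac_ratio (a : ℕ) : Filter.Tendsto (fun N : ℕ => (Nat.factorial (N+a) : ℝ) / (Nat.factorial N * (N:ℝ)^a))
    Filter.atTop (nhds 1) := by
  induction a with
  | zero =>
    refine tendsto_const_nhds.congr fun N => ?_
    have : (Nat.factorial N : ℝ) ≠ 0 := by positivity
    simp [this]
  | succ a ih =>
    have h : Filter.Tendsto (fun N : ℕ => 1 + ((a+1 : ℕ) : ℝ) / (N:ℝ)) Filter.atTop (nhds (1 + 0)) :=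
      tendsto_const_nhds.add (tendsto_const_div_atTop_nhds_zero_nat _)
    have := ih.mul h
    rw [add_zero, one_mul] at this
    refine this.congr' ?_
    filter_upwards [Filter.eventually_gt_atTop 0] with N hN
    have : (Nat.factorial N : ℝ) ≠ 0 := by positivity
    have : (N:ℝ) ≠ 0 := by positivity
    rw [← add_assoc, Nat.factorial_succ]
    push_cast
    field_simp
    ring

def stq (N : ℕ) : ℝ := (Nat.factorial N : ℝ) / (Real.sqrt (2 * N * Real.pi) * (N / Real.exp 1)^N)

lemma stq_lim : Filter.Tendsto stq Filter.atTop (nhds 1) := by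
  have h := Stirling.factorial_isEquivalent_stirling
  rw [Asymptotics.isEquivalent_iff_tendsto_one] at h
  · exact h
  · filter_upwards [Filter.eventually_gt_atTop 0] with N hN
    positivity

lemma multi_lim (p : ℕ) (hp : 1 ≤ p) : Filter.Tendsto (fun N : ℕ => (N:ℝ)^(((p:ℝ)-1)/2) *
    ((Nat.factorial (p*N) : ℝ) / (p^(p*N) * (Nat.factorial N : ℝ)^p))) Filter.atTop
    (nhds (Real.sqrt p / (2*Real.pi)^(((p:ℝ)-1)/2))) := by
  have h1 : Filter.Tendsto (fun N : ℕ => stq (p*N)) Filter.atTop (nhds 1) :=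
    stq_lim.comp (Filter.tendsto_id.const_mul_atTop' (by omega))
  have h2 := (h1.div (stq_lim.pow p) (by simp)).mul_const (Real.sqrt p / (2*Real.pi)^(((p:ℝ)-1)/2))
  simp only [one_pow, div_one, one_mul] at h2
  refine h2.congr' ?_
  filter_upwards [Filter.eventually_gt_atTop 0] with N hN
  simp only [stq, Pi.div_apply]
  have hN' : (0:ℝ) < N := by positivity
  have hp' : (0:ℝ) < p := by exact_mod_cast hp
  have hs : Real.sqrt (2 * N * Real.pi) ^ p = Real.sqrt (2 * N * Real.pi) * ((2*Real.pi)^(((p:ℝ)-1)/2) * (N:ℝ)^(((p:ℝ)-1)/2)) := by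
    rw [← Real.mul_rpow (by positivity) (by positivity), show 2 * Real.pi * N = 2 * N * Real.pi by ring,
      Real.sqrt_eq_rpow, ← Real.rpow_natCast, ← Real.rpow_mul (by positivity), ← Real.rpow_add (by positivity)]
    congr 1; ring
  have hs2 : Real.sqrt (2 * (p*N : ℕ) * Real.pi) = Real.sqrt p * Real.sqrt (2 * N * Real.pi) := by
    rw [← Real.sqrt_mul (by positivity)]; congr 1; push_cast; ring
  have hs3 : (((p*N:ℕ):ℝ) / Real.exp 1)^(p*N) = p^(p*N) * ((N / Real.exp 1)^N)^p := by
    rw [← pow_mul, mul_comm N p, ← mul_pow]; congr 1; push_cast; ring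
  rw [hs2, hs3, div_pow (Nat.factorial N : ℝ), mul_pow (Real.sqrt (2 * N * Real.pi)), hs]
  have : (0:ℝ) < Real.sqrt p := by positivity
  have : (0:ℝ) < Real.sqrt (2 * N * Real.pi) := by positivity
  have : (0:ℝ) < (2*Real.pi)^(((p:ℝ)-1)/2) := by positivity
  have : (0:ℝ) < (N:ℝ)^(((p:ℝ)-1)/2) := by positivity
  have : (0:ℝ) < (Nat.factorial N : ℝ)^p := by positivity
  have : (0:ℝ) < ((N / Real.exp 1)^N)^p := by positivity
  have : (0:ℝ) < (p:ℝ)^(p*N) := by positivity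
  generalize Real.sqrt p = x1 at *
  generalize Real.sqrt (2 * N * Real.pi) = x2 at *
  generalize (2*Real.pi)^(((p:ℝ)-1)/2) = x3 at *
  generalize (N:ℝ)^(((p:ℝ)-1)/2) = x4 at *
  generalize (Nat.factorial N : ℝ)^p = x5 at *
  generalize ((N / Real.exp 1)^N)^p = x6 at *
  generalize (p:ℝ)^(p*N) = x7 at *
  field_simp

lemma term_lim (p k : ℕ) (hp : 1 ≤ p) (a : ℕ → ℕ) (ha : 2 * ∑ i ∈ Finset.range p, a i = 2 * k + p * (p-1)) :
    Filter.Tendsto (fun N : ℕ => ((N+p : ℕ):ℝ)^(((p:ℝ)^2-1)/2) *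
    ((Nat.factorial (p*N+k) : ℝ) / (p^(p*N+k) * ∏ i ∈ Finset.range p, (Nat.factorial (N + a i) : ℝ)))) Filter.atTop
    (nhds (Real.sqrt p / (2*Real.pi)^(((p:ℝ)-1)/2))) := by
  have h0 : Filter.Tendsto (fun N : ℕ => (1 + (p:ℝ) / N)^(((p:ℝ)^2-1)/2)) Filter.atTop (nhds 1) := by
    have : Filter.Tendsto (fun N : ℕ => (1 + (p:ℝ) / N)) Filter.atTop (nhds (1 + 0)) :=
      tendsto_const_nhds.add (tendsto_const_div_atTop_nhds_zero_nat _)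
    have := this.rpow_const (p := ((p:ℝ)^2-1)/2) (Or.inl (by norm_num))
    simpa using this
  have h1 : Filter.Tendsto (fun N : ℕ => (Nat.factorial (p*N+k) : ℝ) / (Nat.factorial (p*N) * ((p*N:ℕ):ℝ)^k)) Filter.atTop (nhds 1) :=
    (fac_ratio k).comp (Filter.tendsto_id.const_mul_atTop' (by omega))
  have h2 : Filter.Tendsto (fun N : ℕ => ∏ i ∈ Finset.range p, ((Nat.factorial (N+a i) : ℝ) / (Nat.factorial N * (N:ℝ)^a i))) Filter.atTop (nhds (∏ i ∈ Finset.range p, 1)) :=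
    tendsto_finset_prod _ fun i _ => fac_ratio (a i)
  rw [Finset.prod_const_one] at h2
  have h3 := ((h0.mul h1).div h2 one_ne_zero).mul (multi_lim p hp)
  simp only [mul_one, div_one, one_mul] at h3
  refine h3.congr' ?_
  filter_upwards [Filter.eventually_gt_atTop 0] with N hN
  have hN' : (0:ℝ) < N := by positivity
  have hp' : (0:ℝ) < p := by exact_mod_cast hp
  simp only [Pi.div_apply]
  have e1 : ∏ i ∈ Finset.range p, ((Nat.factorial (N+a i) : ℝ) / (Nat.factorial N * (N:ℝ)^a i)) =
     (∏ i ∈ Finset.range p, (Nat.factorial (N+a i) : ℝ)) / ((Nat.factorial N : ℝ)^p * (N:ℝ)^(∑ i ∈ Finset.range p, a i)) := by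
    rw [Finset.prod_div_distrib, Finset.prod_mul_distrib, Finset.prod_const, Finset.card_range, Finset.prod_pow_eq_pow_sum]
  obtain ⟨T, hT⟩ : ∃ T, ∑ i ∈ Finset.range p, a i = k + T := ⟨∑ i ∈ Finset.range p, a i - k, by
    have := Nat.zero_le (p*(p-1)); omega⟩
  have hT2 : 2 * T = p * (p-1) := by omega
  have hT3 : (T:ℝ) = p * (p-1)/2 := by
    have : ((2 * T : ℕ):ℝ) = ((p * (p-1) : ℕ):ℝ) := by rw [hT2]
    push_cast [Nat.cast_sub hp] at this
    linarith
  have e2 : ((N+p : ℕ):ℝ)^(((p:ℝ)^2-1)/2) = (1 + (p:ℝ) / N)^(((p:ℝ)^2-1)/2) * ((N:ℝ)^(((p:ℝ)-1)/2) * (N:ℝ)^T) := by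
    rw [← Real.rpow_natCast (N:ℝ) T, ← Real.rpow_add hN', hT3,
      show ((p:ℝ)-1)/2 + p * (p-1)/2 = ((p:ℝ)^2-1)/2 by ring, ← Real.mul_rpow (by positivity) (by positivity)]
    congr 1
    push_cast
    field_simp
  rw [e1, e2, hT]
  have : (0:ℝ) < ∏ i ∈ Finset.range p, (Nat.factorial (N+a i) : ℝ) := Finset.prod_pos fun i _ => by positivity
  have : (Nat.factorial (p*N) : ℝ) ≠ 0 := by positivity
  have : (Nat.factorial N : ℝ) ≠ 0 := by positivity
  have : (0:ℝ) < (N:ℝ)^(((p:ℝ)-1)/2) := by positivity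
  rw [pow_add, pow_add]
  push_cast
  rw [mul_pow]
  field_simp

lemma poch_succ (x : ℝ) (m : ℕ) : pochRe x (m+1) = pochRe x m * (x + m) := by
  unfold pochRe; rw [Finset.prod_range_succ]

lemma poch_vander (a b : ℝ) (k : ℕ) : pochRe (a+b) k =
    ∑ ij ∈ Finset.HasAntidiagonal.antidiagonal k, (k.choose ij.1 : ℝ) * (pochRe a ij.1 * pochRe b ij.2) := by
  induction k with
  | zero => simp [pochRe]
  | succ k ih =>
    rw [Finset.sum_antidiagonal_choose_succ_mul (fun i j => pochRe a i * pochRe b j), poch_succ, ih,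
      Finset.sum_mul, ← Finset.sum_add_distrib]
    refine Finset.sum_congr rfl fun ij hij => ?_
    rw [Finset.HasAntidiagonal.mem_antidiagonal] at hij
    have h1 : (k.choose ij.2) = k.choose ij.1 := by
      rw [← hij, Nat.choose_symm_add]
    rw [h1, poch_succ, poch_succ, ← hij]
    push_cast
    ring

lemma poch_gamma (r : ℕ) : Real.Gamma (r + 1/2) = pochRe (1/2) r * Real.sqrt Real.pi := by
  induction r with
  | zero => simp [pochRe]; rw [← one_div, Real.Gamma_one_half_eq]
  | succ r ih =>
    rw [poch_succ]
    have : ((r+1 : ℕ) : ℝ) + 1/2 = (r + 1/2) + 1 := by push_cast; ring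
    rw [this, Real.Gamma_add_one (by positivity), ih]; ring

lemma half_int (r : ℕ) : ∫ x in Set.Ioi (0:ℝ), (x^2/2)^r * Real.exp (-x^2/2) =
    Real.sqrt 2 / 2 * (pochRe (1/2) r * Real.sqrt Real.pi) := by
  have h := integral_rpow_mul_exp_neg_mul_rpow (p := 2) (q := ((2*r : ℕ) : ℝ)) (b := 1/2) (by norm_num)
    (by have : (0:ℝ) ≤ ((2*r:ℕ):ℝ) := by positivity
        linarith) (by norm_num)
  have e : ∀ x : ℝ, (x^2/2)^r * Real.exp (-x^2/2) = (1/2)^r * (x ^ ((2*r : ℕ) : ℝ) * Real.exp (-(1/2) * x ^ (2:ℝ))) := by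
    intro x
    rw [Real.rpow_natCast, Real.rpow_two, div_eq_mul_inv, mul_pow, ← pow_mul,
      show -x^2/2 = -(1/2) * x^2 by ring]
    ring
  simp only [e]
  rw [MeasureTheory.integral_const_mul, h]
  have e2 : (((2*r : ℕ) : ℝ) + 1)/2 = r + 1/2 := by push_cast; ring
  rw [neg_div, e2, poch_gamma]
  have e3 : ((1:ℝ)/2) ^ (-((r:ℝ)+1/2)) = 2^r * Real.sqrt 2 := by
    rw [one_div, Real.inv_rpow (by norm_num), Real.rpow_neg (by norm_num), inv_inv, Real.rpow_add (by norm_num),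
      Real.rpow_natCast, Real.sqrt_eq_rpow]
    norm_num
  rw [e3]
  have : ((1:ℝ)/2)^r * 2^r = 1 := by rw [← mul_pow]; norm_num
  linear_combination (Real.sqrt 2 * (1/2) * (pochRe (1 / 2) r * Real.sqrt Real.pi)) * this

lemma gauss_mom (r : ℕ) : ∫ x, (x^2/2)^r ∂(ProbabilityTheory.gaussianReal 0 1) = pochRe (1/2) r := by
  rw [ProbabilityTheory.integral_gaussianReal_eq_integral_smul one_ne_zero]
  have : ∀ x : ℝ, ProbabilityTheory.gaussianPDFReal 0 1 x • (x^2/2)^r =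
     (Real.sqrt (2 * Real.pi))⁻¹ * ((|x|^2/2)^r * Real.exp (-|x|^2/2)) := by
    intro x
    rw [ProbabilityTheory.gaussianPDFReal, sq_abs]
    simp
    ring
  simp only [this]
  rw [MeasureTheory.integral_const_mul, integral_comp_abs (f := fun x => (x^2/2)^r * Real.exp (-x^2/2)), half_int,
    Real.sqrt_mul (by norm_num)]
  have : Real.sqrt Real.pi ≠ 0 := by positivity
  field_simp

lemma gauss_int (r : ℕ) : MeasureTheory.Integrable (fun x : ℝ => (x^2/2)^r) (ProbabilityTheory.gaussianReal 0 1) := by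
  have h := (ProbabilityTheory.memLp_id_gaussianReal (μ := 0) (v := 1) ((2*r : ℕ) : NNReal)).integrable_norm_pow'
  have : (fun x : ℝ => (x^2/2)^r) = fun x => (1/2)^r * ‖id x‖ ^ (2*r) := by
    ext x; simp; rw [pow_mul, sq_abs, div_eq_mul_inv, mul_pow]; simp [mul_comm]
  rw [this]
  exact MeasureTheory.Integrable.const_mul (by simpa using h) _

lemma chi_aux (m : ℕ) : ∀ k, MeasureTheory.Integrable (fun x : Fin m → ℝ => ((∑ i, x i ^ 2) / 2) ^ k)
    (MeasureTheory.Measure.pi fun _ : Fin m => ProbabilityTheory.gaussianReal 0 1) ∧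
    chiHalfMoment m k = pochRe (m/2) k := by
  induction m with
  | zero =>
    intro k
    constructor
    · simp
    · simp [chiHalfMoment, pochRe]
      rcases k with _ | k
      · simp
      · simp [Finset.prod_range_succ']
  | succ m ih =>
    intro k
    have mp := MeasureTheory.measurePreserving_piFinSuccAbove (fun _ : Fin (m+1) => ProbabilityTheory.gaussianReal 0 1) 0
    have e : (fun x : Fin (m+1) → ℝ => ((∑ i, x i ^ 2) / 2) ^ k) =
      (fun z : ℝ × (Fin m → ℝ) => ∑ ij ∈ Finset.HasAntidiagonal.antidiagonal k, (k.choose ij.1 : ℝ) * ((z.1^2/2)^ij.1 * ((∑ i, z.2 i^2)/2)^ij.2)) ∘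
       (MeasurableEquiv.piFinSuccAbove (fun _ => ℝ) 0) := by
      ext x
      simp only [Function.comp, MeasurableEquiv.piFinSuccAbove_apply]
      rw [Fin.sum_univ_succ, add_div, (Commute.all _ _).add_pow']
      refine Finset.sum_congr rfl fun ij hij => ?_
      rw [nsmul_eq_mul]
      rfl
    have hi : ∀ ij ∈ Finset.HasAntidiagonal.antidiagonal k, MeasureTheory.Integrable (fun z : ℝ × (Fin m → ℝ) => (k.choose ij.1 : ℝ) * ((z.1^2/2)^ij.1 * ((∑ i, z.2 i^2)/2)^ij.2))
      ((ProbabilityTheory.gaussianReal 0 1).prod (MeasureTheory.Measure.pi fun _ : Fin m => ProbabilityTheory.gaussianReal 0 1)) := by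
      intro ij _
      exact ((gauss_int ij.1).mul_prod (ih ij.2).1).const_mul _
    constructor
    · rw [e, mp.integrable_comp_emb (MeasurableEquiv.measurableEmbedding _)]
      exact MeasureTheory.integrable_finset_sum _ hi
    · unfold chiHalfMoment
      rw [e]
      have := mp.integral_comp (MeasurableEquiv.measurableEmbedding _) (fun z : ℝ × (Fin m → ℝ) => ∑ ij ∈ Finset.HasAntidiagonal.antidiagonal k, (k.choose ij.1 : ℝ) * ((z.1^2/2)^ij.1 * ((∑ i, z.2 i^2)/2)^ij.2))
      refine this.trans ?_
      rw [MeasureTheory.integral_finset_sum _ hi]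
      rw [show ((m+1 : ℕ):ℝ)/2 = 1/2 + m/2 by push_cast; ring, poch_vander]
      refine Finset.sum_congr rfl fun ij hij => ?_
      rw [MeasureTheory.integral_const_mul, 
        MeasureTheory.integral_prod_mul (fun x : ℝ => (x^2/2)^ij.1) (fun y : Fin m → ℝ => ((∑ i, y i^2)/2)^ij.2),
        gauss_mom]
      rw [← (ih ij.2).2]; rfl

lemma chi_choose (p q k : ℕ) (h : 1 ≤ p * q) : chiHalfMoment (2*p*q) k = Nat.factorial k * ((p*q-1+k).choose k : ℝ) := by
  rw [(chi_aux _ k).2]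
  rw [show ((2*p*q : ℕ):ℝ)/2 = ((p*q : ℕ) : ℝ) by push_cast; ring]
  generalize p*q = N at *
  obtain ⟨M, rfl⟩ : ∃ M, N = M+1 := ⟨N-1, by omega⟩
  have : pochRe ((M+1 : ℕ):ℝ) k = ((M+1).ascFactorial k : ℝ) := by
    induction k with
    | zero => simp [pochRe]
    | succ k ih => rw [poch_succ, ih, Nat.ascFactorial_succ]; push_cast; ring
  rw [this, Nat.ascFactorial_eq_factorial_mul_choose]
  simp

lemma main_lim (p q k : ℕ) (hp : 1 ≤ p) (hpq : p ≤ q) :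
    Filter.Tendsto
      (fun n : ℕ => (n : ℝ) ^ (((p : ℝ) ^ 2 - 1) / 2) *
        Eword (p * (n - p) + k) p
          (fun lam => indSup n p lam * (Hstrip n p q lam : ℝ)))
      Filter.atTop
      (nhds (Real.sqrt p * (∏ j ∈ Finset.Icc 1 p, (Nat.factorial (q - j) : ℝ)) /
          (2 * Real.pi) ^ (((p : ℝ) - 1) / 2) *
          (Nat.choose (p * q - 1 + k) k : ℝ))) := by
  rw [← Filter.tendsto_add_atTop_iff_nat p]
  have hsum := sum_KK p q k hp
  have hpq1 : 1 ≤ p * q := Nat.mul_pos hp (by omega)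
  rw [Nat.multichoose_eq, show p * q + k - 1 = p * q - 1 + k by omega] at hsum
  have hprod : ∏ j ∈ Finset.Icc 1 p, (Nat.factorial (q - j) : ℝ) = ∏ i ∈ Finset.range p, (Nat.factorial (q - 1 - i) : ℝ) := by
    have h1 : Finset.Icc 1 p = Finset.Ico (0+1) (p+1) := by
      ext x; simp only [Finset.mem_Icc, Finset.mem_Ico]; omega
    rw [h1, ← Finset.prod_Ico_add' (fun i => (Nat.factorial (q - i) : ℝ)) 0 p 1, ← Finset.range_eq_Ico]
    refine Finset.prod_congr rfl fun i _ => ?_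
    rw [show q - (i+1) = q - 1 - i by omega]
  have hc : Real.sqrt p * (∏ j ∈ Finset.Icc 1 p, (Nat.factorial (q - j) : ℝ)) /
          (2 * Real.pi) ^ (((p : ℝ) - 1) / 2) *
          (Nat.choose (p * q - 1 + k) k : ℝ) =
      ∑ κ ∈ KK p k, (Real.sqrt p / (2*Real.pi)^(((p:ℝ)-1)/2)) * ((numSSYT (ydd κ) p : ℝ) * (numSSYT (ydd κ) q : ℝ) *
        ∏ i ∈ Finset.range p, (Nat.factorial (q - 1 - i) : ℝ)) := by
    rw [← Finset.mul_sum, ← Finset.sum_mul, ← hsum, hprod]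
    push_cast
    ring
  rw [hc]
  have hT : Filter.Tendsto (fun N : ℕ => ∑ κ ∈ KK p k, (((N+p : ℕ):ℝ)^(((p:ℝ)^2-1)/2) *
    ((Nat.factorial (p*N+k) : ℝ) / (p^(p*N+k) * ∏ i ∈ Finset.range p, (Nat.factorial (N + (κ i + (p - 1 - i))) : ℝ)))) *
      ((numSSYT (ydd κ) p : ℝ) * (numSSYT (ydd κ) q : ℝ) *
        ∏ i ∈ Finset.range p, (Nat.factorial (q - 1 - i) : ℝ))) Filter.atTop (nhds (∑ κ ∈ KK p k, (Real.sqrt p / (2*Real.pi)^(((p:ℝ)-1)/2)) * ((numSSYT (ydd κ) p : ℝ) * (numSSYT (ydd κ) q : ℝ) *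
        ∏ i ∈ Finset.range p, (Nat.factorial (q - 1 - i) : ℝ)))) := by
    refine tendsto_finsetSum _ fun κ hκ => ?_
    refine Filter.Tendsto.mul_const _ (term_lim p k hp (fun i => κ i + (p-1-i)) ?_)
    rw [mem_KK] at hκ
    have hd : ∑ i ∈ Finset.range p, κ i = k := by
      rw [← hκ.2.2, Finsupp.degree_apply]
      symm
      apply Finset.sum_subset
      · intro i hi
        rw [Finset.mem_range]
        by_contra h
        exact (Finsupp.mem_support_iff.1 hi) (hκ.2.1 i (by omega))
      · intro i _ hi
        simpa using hi
    rw [Finset.sum_add_distrib, hd, Finset.sum_range_reflect (fun i => i), mul_add]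
    have := Finset.sum_range_id_mul_two p
    omega
  refine hT.congr' ?_
  filter_upwards [Filter.eventually_ge_atTop q] with N hN
  rw [Eword_eq (N+p) p q k hp hpq (by omega), Finset.mul_sum]
  refine Finset.sum_congr rfl fun κ hκ => ?_
  simp only [Nat.add_sub_cancel, ← add_assoc, mul_assoc]

theorem main_thm (p q k : ℕ) (hp : 1 ≤ p) (hpq : p ≤ q) :
    Filter.Tendsto
      (fun n : ℕ => (n : ℝ) ^ (((p : ℝ) ^ 2 - 1) / 2) *
        Eword (p * (n - p) + k) p
          (fun lam => indSup n p lam * (Hstrip n p q lam : ℝ)))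
      Filter.atTop
      (nhds (Real.sqrt p * (∏ j ∈ Finset.Icc 1 p, (Nat.factorial (q - j) : ℝ)) /
        ((2 * Real.pi) ^ (((p : ℝ) - 1) / 2) * (Nat.factorial k : ℝ)) *
        chiHalfMoment (2 * p * q) k)) ∧
    Asymptotics.IsEquivalent Filter.atTop
      (fun n : ℕ =>
        Eword (p * (n - p) + k) p
          (fun lam => indSup n p lam * (Hstrip n p q lam : ℝ)))
      (fun n : ℕ =>
        (Real.sqrt p * (∏ j ∈ Finset.Icc 1 p, (Nat.factorial (q - j) : ℝ)) /
          (2 * Real.pi) ^ (((p : ℝ) - 1) / 2) *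
          (Nat.choose (p * q - 1 + k) k : ℝ)) *
        (n : ℝ) ^ (-(((p : ℝ) ^ 2 - 1) / 2))) := by
  have h := main_lim p q k hp hpq
  have hpq1 : 1 ≤ p * q := Nat.mul_pos hp (by omega)
  have hp' : (0:ℝ) < p := by exact_mod_cast hp
  have hC : 0 < (Real.sqrt p * (∏ j ∈ Finset.Icc 1 p, (Nat.factorial (q - j) : ℝ)) /
          (2 * Real.pi) ^ (((p : ℝ) - 1) / 2) *
          (Nat.choose (p * q - 1 + k) k : ℝ)) := by
    have h1 : 0 < ∏ j ∈ Finset.Icc 1 p, (Nat.factorial (q - j) : ℝ) := Finset.prod_pos fun i _ => by positivity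
    have h2 : (0:ℝ) < (Nat.choose (p * q - 1 + k) k : ℝ) := by
      exact_mod_cast Nat.choose_pos (by omega)
    positivity
  constructor
  · convert h using 2
    rw [chi_choose p q k hpq1]
    have : (Nat.factorial k : ℝ) ≠ 0 := by positivity
    have : (0:ℝ) < (2*Real.pi)^(((p:ℝ)-1)/2) := by positivity
    field_simp
  · generalize (Real.sqrt p * (∏ j ∈ Finset.Icc 1 p, (Nat.factorial (q - j) : ℝ)) /
          (2 * Real.pi) ^ (((p : ℝ) - 1) / 2) *
          (Nat.choose (p * q - 1 + k) k : ℝ)) = C at *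
    rw [Asymptotics.isEquivalent_iff_tendsto_one]
    · have h2 := h.div_const C
      rw [div_self hC.ne'] at h2
      refine h2.congr' ?_
      filter_upwards [Filter.eventually_gt_atTop 0] with n hn
      have hn' : (0:ℝ) < n := by positivity
      have : (0:ℝ) < (n:ℝ)^(((p:ℝ)^2-1)/2) := by positivity
      rw [Pi.div_apply, Real.rpow_neg hn'.le]
      field_simp
    · filter_upwards [Filter.eventually_gt_atTop 0] with n hn
      have hn' : (0:ℝ) < n := by positivity
      positivity

end StripHook

/-- asymptotics of `E^{p(n−p)+k,p}(1_{λ⊇μ} H(λ))` as `n → ∞`,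
in terms of the `k`-th moment of `½ χ²_{2pq}`. -/
theorem statement2 (p q k : ℕ) (hp : 1 ≤ p) (hpq : p ≤ q) :
    Filter.Tendsto
      (fun n : ℕ => (n : ℝ) ^ (((p : ℝ) ^ 2 - 1) / 2) *
        Eword (p * (n - p) + k) p
          (fun lam => indSup n p lam * (Hstrip n p q lam : ℝ)))
      Filter.atTop
      (nhds (Real.sqrt p * (∏ j ∈ Finset.Icc 1 p, (Nat.factorial (q - j) : ℝ)) /
        ((2 * Real.pi) ^ (((p : ℝ) - 1) / 2) * (Nat.factorial k : ℝ)) *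
        chiHalfMoment (2 * p * q) k)) ∧
    Asymptotics.IsEquivalent Filter.atTop
      (fun n : ℕ =>
        Eword (p * (n - p) + k) p
          (fun lam => indSup n p lam * (Hstrip n p q lam : ℝ)))
      (fun n : ℕ =>
        (Real.sqrt p * (∏ j ∈ Finset.Icc 1 p, (Nat.factorial (q - j) : ℝ)) /
          (2 * Real.pi) ^ (((p : ℝ) - 1) / 2) *
          (Nat.choose (p * q - 1 + k) k : ℝ)) *
        (n : ℝ) ^ (-(((p : ℝ) ^ 2 - 1) / 2))) := by
  exact StripHook.main_thm p q k hp hpq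

end
end

section
/- Fix integers p ≥ 1 and k ≥ 0. Then lim_{N→∞} N^{(p²−1)/2} · P^{Np+k, p}( λ_p ≥ N ) = ( √p · ∏_{j=1}^p (p−j)! ) / ( (2π)^{(p−1)/2} · k! ) · E( (½ Z_{2p²})^k ), where P^{Np+k,p}(λ_p ≥ N) is the probability that the p-th part of a random partition of Np+k (distributed according to P^{Np+k,p}) is at least N. Consequently P^{Np+k,p}(λ_p ≥ N) ∼ c_{p,p,k} · N^{−(p²−1)/2} as N → ∞, with c_{p,p,k} = ( √p ∏_{j=1}^p (p−j)! / (2π)^{(p−1)/2} ) · binom(p²−1+k, k). -/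
open MeasureTheory Filter Real
open scoped BigOperators Topology

noncomputable section

/-- The probability `P^{ℓ,p}(λ_p ≥ N)` that the `p`-th part of a random
partition of `ℓ` (under `P^{ℓ,p}`) is at least `N`. -/
def PwordTail (ℓ p N : ℕ) : ℝ :=
  ∑' μ : YoungDiagram, if μ.card = ℓ ∧ N ≤ μ.rowLen (p - 1) then Pword ℓ p μ else 0

lemma cb_multilin {R : Type*} [CommRing R] {p : ℕ} (M : ℕ) (A B : ℕ → Fin p → R) :
    Matrix.det (Matrix.of fun i j => ∑ m ∈ Finset.range M, B m i * A m j) =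
    ∑ a ∈ Fintype.piFinset (fun _ : Fin p => Finset.range M),
      (∏ i, B (a i) i) * Matrix.det (Matrix.of fun i j => A (a i) j) := by
  have h1 : Matrix.det (Matrix.of fun i j => ∑ m ∈ Finset.range M, B m i * A m j) =
    (Matrix.detRowAlternating (n := Fin p) (R := R)).toMultilinearMap
      (fun i => ∑ m ∈ Finset.range M, B m i • A m) := by
    show Matrix.det _ = Matrix.det _
    congr 1
    ext i j
    simp [Finset.sum_apply]
  rw [h1, MultilinearMap.map_sum_finset]
  refine Finset.sum_congr rfl fun a _ => ?_
  rw [MultilinearMap.map_smul_univ]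
  rfl

lemma cauchy_binet {R : Type*} [CommRing R] {p : ℕ} (M : ℕ) (A B : ℕ → Fin p → R) :
    Matrix.det (Matrix.of fun i j => ∑ m ∈ Finset.range M, B m i * A m j) =
    ∑ a ∈ (Fintype.piFinset (fun _ : Fin p => Finset.range M)).filter StrictMono,
      Matrix.det (Matrix.of fun i j => A (a i) j) * Matrix.det (Matrix.of fun i j => B (a i) j) := by
  classical
  rw [cb_multilin]
  have h0 : ∑ a ∈ Fintype.piFinset (fun _ : Fin p => Finset.range M),
      (∏ i, B (a i) i) * Matrix.det (Matrix.of fun i j => A (a i) j) =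
      ∑ a ∈ (Fintype.piFinset (fun _ : Fin p => Finset.range M)).filter Function.Injective,
      (∏ i, B (a i) i) * Matrix.det (Matrix.of fun i j => A (a i) j) := by
    symm
    apply Finset.sum_subset (Finset.filter_subset _ _)
    intro a ha ha'
    have : ¬ Function.Injective a := by
      intro h; exact ha' (Finset.mem_filter.2 ⟨ha, h⟩)
    simp only [Function.Injective, not_forall] at this
    obtain ⟨i, j, hij, hne⟩ := this
    rw [Matrix.det_zero_of_row_eq hne, mul_zero]
    ext k; simp [hij]
  rw [h0]
  have h1 : ∀ a : Fin p → ℕ, Matrix.det (Matrix.of fun i j => A (a i) j) *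
      Matrix.det (Matrix.of fun i j => B (a i) j) =
      ∑ σ : Equiv.Perm (Fin p), (∏ i, B (a (σ i)) i) *
        Matrix.det (Matrix.of fun i j => A (a (σ i)) j) := by
    intro a
    rw [Matrix.det_apply' (Matrix.of fun i j => B (a i) j), Finset.mul_sum]
    refine Finset.sum_congr rfl fun σ _ => ?_
    have := Matrix.det_permute σ (Matrix.of fun i j => A (a i) j)
    have h2 : (Matrix.of fun i j => A (a (σ i)) j) =
      (Matrix.of fun i j => A (a i) j).submatrix σ id := by ext; simp
    rw [h2, this]
    simp only [Matrix.of_apply]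
    ring
  rw [Finset.sum_congr rfl fun a _ => h1 a, ← Finset.sum_product']
  symm
  refine Finset.sum_bij' (fun x _ => x.1 ∘ x.2)
    (fun a _ => (a ∘ Tuple.sort a, (Tuple.sort a)⁻¹)) ?_ ?_ ?_ ?_ ?_
  · rintro ⟨a, σ⟩ h
    simp only [Finset.mem_product, Finset.mem_filter, Fintype.mem_piFinset] at h ⊢
    exact ⟨fun i => h.1.1 _, h.1.2.injective.comp σ.injective⟩
  · intro a h
    simp only [Finset.mem_product, Finset.mem_filter, Fintype.mem_piFinset] at h ⊢
    exact ⟨⟨fun i => h.1 _, (Tuple.monotone_sort a).strictMono_of_injective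
      (h.2.comp (Tuple.sort a).injective)⟩, Finset.mem_univ _⟩
  · rintro ⟨a, σ⟩ h
    simp only [Finset.mem_product, Finset.mem_filter, Fintype.mem_piFinset] at h
    have h3 : (a ∘ σ) ∘ (Tuple.sort (a ∘ σ)) = (a ∘ σ) ∘ (σ⁻¹ : Equiv.Perm (Fin p)) := by
      apply Tuple.unique_monotone (Tuple.monotone_sort _)
      have : (a ∘ σ) ∘ (σ⁻¹ : Equiv.Perm (Fin p)) = a := by ext; simp
      rw [this]; exact h.1.2.monotone
    have h4 : Tuple.sort (a ∘ σ) = σ⁻¹ := by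
      ext i
      have := congrFun h3 i
      have := (h.1.2.injective.comp σ.injective) this
      rw [this]
    simp only [h4, inv_inv, Prod.mk.injEq, and_true]
    ext; simp
  · intro a h
    ext; simp
  · rintro ⟨a, σ⟩ h
    rfl
def Hf (i j : ℕ) : PowerSeries ℤ := PowerSeries.mk fun m => (m.choose i * m.choose j : ℤ)

lemma Hf_00 : (1 - PowerSeries.X) * Hf 0 0 = 1 := by
  ext n
  cases n with
  | zero => simp [Hf, sub_mul]
  | succ n => simp [Hf, sub_mul, PowerSeries.coeff_succ_X_mul, PowerSeries.coeff_one]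

lemma Hf_0s (j : ℕ) : (1 - PowerSeries.X) * Hf 0 (j+1) = PowerSeries.X * Hf 0 j := by
  ext n
  cases n with
  | zero => simp [Hf, sub_mul]
  | succ n =>
    simp [Hf, sub_mul, PowerSeries.coeff_succ_X_mul, Nat.choose_succ_succ]

lemma Hf_comm (i j : ℕ) : Hf i j = Hf j i := by
  simp only [Hf, mul_comm]

lemma Hf_ss (i j : ℕ) : (1 - PowerSeries.X) * Hf (i+1) (j+1) =
    PowerSeries.X * (Hf i (j+1) + Hf (i+1) j + Hf i j) := by
  ext n
  cases n with
  | zero => simp [Hf, sub_mul]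
  | succ n =>
    simp [Hf, sub_mul, PowerSeries.coeff_succ_X_mul, Nat.choose_succ_succ]
    ring

def Pf (i j : ℕ) : PowerSeries ℤ := ∑ k ∈ Finset.range (i+1),
  ((i.choose k * j.choose k : ℕ) : PowerSeries ℤ) * PowerSeries.X ^ (i + j - k)

lemma Pf_eq (K i j : ℕ) (h : i < K) : Pf i j = ∑ k ∈ Finset.range K,
  ((i.choose k * j.choose k : ℕ) : PowerSeries ℤ) * PowerSeries.X ^ (i + j - k) := by
  apply Finset.sum_subset
  · intro x; simp; omega
  · intro x _ hx
    rw [Nat.choose_eq_zero_of_lt (by simp at hx; omega)]; simp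

lemma Pf_comm (i j : ℕ) : Pf i j = Pf j i := by
  rw [Pf_eq (i+j+1) i j (by omega), Pf_eq (i+j+1) j i (by omega)]
  refine Finset.sum_congr rfl fun k _ => ?_
  rw [mul_comm (i.choose k), add_comm i j]

lemma Pf_0 (j : ℕ) : Pf 0 j = PowerSeries.X ^ j := by
  simp [Pf]

lemma Pf_ss (i j : ℕ) : Pf (i+1) (j+1) =
    PowerSeries.X * Pf i (j+1) + PowerSeries.X * Pf (i+1) j +
     (PowerSeries.X - PowerSeries.X ^ 2) * Pf i j := by
  have e1 : ∀ (a b : ℕ) (k : ℕ), ((a.choose k * b.choose k : ℕ) : PowerSeries ℤ) *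
      (PowerSeries.X * PowerSeries.X ^ (a + b - k)) =
      ((a.choose k * b.choose k : ℕ) : PowerSeries ℤ) * PowerSeries.X ^ (a + b + 1 - k) := by
    intro a b k
    by_cases h : k ≤ a
    · rw [← pow_succ']; congr 2; omega
    · rw [Nat.choose_eq_zero_of_lt (by omega)]; simp
  have key : Pf (i+1) (j+1) - PowerSeries.X * Pf i (j+1) - PowerSeries.X * Pf (i+1) j +
      PowerSeries.X ^ 2 * Pf i j = PowerSeries.X * Pf i j := by
    rw [Pf_eq (i+2) (i+1) (j+1) (by omega), Pf_eq (i+2) i (j+1) (by omega),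
      Pf_eq (i+2) (i+1) j (by omega)]
    conv_lhs => rw [Pf_eq (i+2) i j (by omega)]
    conv_rhs => rw [Pf]
    simp only [Finset.mul_sum, pow_two, mul_assoc]
    simp only [mul_left_comm (PowerSeries.X : PowerSeries ℤ), e1]
    rw [← Finset.sum_sub_distrib, ← Finset.sum_sub_distrib, ← Finset.sum_add_distrib]
    rw [Finset.sum_range_succ']
    have e2 : ∀ k, ((i.choose k * j.choose k : ℕ) : PowerSeries ℤ) *
      (PowerSeries.X * PowerSeries.X ^ (i + j + 1 - k)) =
      ((i.choose k * j.choose k : ℕ) : PowerSeries ℤ) * PowerSeries.X ^ (i + j + 2 - k) := by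
      intro k
      by_cases h : k ≤ i
      · rw [← pow_succ']; congr 2; omega
      · rw [Nat.choose_eq_zero_of_lt (by omega)]; simp
    simp only [e2]
    have e3 : ∀ k, i + 1 + (j + 1) - k = i + j + 2 - k := by intro k; omega
    have e4 : ∀ k, i + (j + 1) + 1 - k = i + j + 2 - k := by intro k; omega
    have e5 : ∀ k, i + 1 + j + 1 - k = i + j + 2 - k := by intro k; omega
    simp only [e3, e4, e5]
    have e6 : ∀ k, i + j + 2 - (k + 1) = i + j + 1 - k := by intro k; omega
    simp only [e6, Nat.choose_succ_succ, Nat.choose_zero_right]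
    have e0 : ∀ (x : PowerSeries ℤ), x + (((1 * 1 : ℕ) : PowerSeries ℤ) * PowerSeries.X ^ (i + j + 2 - 0)
        - ((1 * 1 : ℕ) : PowerSeries ℤ) * PowerSeries.X ^ (i + j + 2 - 0)
        - ((1 * 1 : ℕ) : PowerSeries ℤ) * PowerSeries.X ^ (i + j + 2 - 0)
        + ((1 * 1 : ℕ) : PowerSeries ℤ) * PowerSeries.X ^ (i + j + 2 - 0)) = x := by
      intro x; ring
    rw [e0]
    refine Finset.sum_congr rfl fun k _ => ?_
    push_cast
    ring
  linear_combination key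

lemma Hf_Pf (i j : ℕ) : (1 - PowerSeries.X) ^ (i + j + 1) * Hf i j = Pf i j := by
  have h0 : ∀ j, (1 - PowerSeries.X) ^ (0 + j + 1) * Hf 0 j = Pf 0 j := by
    intro j
    induction j with
    | zero => simpa [Pf] using Hf_00
    | succ j ih =>
      rw [Pf_0] at ih ⊢
      rw [pow_succ, mul_assoc, Hf_0s, pow_succ, ← ih]; ring
  induction i generalizing j with
  | zero => exact h0 j
  | succ i ih =>
    induction j with
    | zero =>
      have := h0 (i+1)
      rw [Hf_comm, Pf_comm, ← this]; congr 2; omega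
    | succ j ih2 =>
      rw [Pf_ss, ← ih2, ← ih (j+1), ← ih j, pow_succ, mul_assoc, Hf_ss]
      ring

lemma det_Pf (p : ℕ) : Matrix.det (Matrix.of fun i j : Fin p => Pf i j) =
    PowerSeries.X ^ (∑ i : Fin p, (i : ℕ)) := by
  let L : Matrix (Fin p) (Fin p) (PowerSeries ℤ) :=
    Matrix.of fun i k => ((i : ℕ).choose k : PowerSeries ℤ) * PowerSeries.X ^ ((i : ℕ) - k)
  have hL : L.det = 1 := by
    rw [Matrix.det_of_isLowerTriangular]
    · simp [L]
    · intro i j h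
      have : (i : ℕ) < j := by simpa using h
      simp [L, Nat.choose_eq_zero_of_lt this]
  have h : (Matrix.of fun i j : Fin p => Pf i j) =
      L * Matrix.diagonal (fun k : Fin p => PowerSeries.X ^ (k : ℕ)) * L.transpose := by
    ext1 i j
    rw [Matrix.mul_apply]
    simp only [Matrix.mul_diagonal, Matrix.of_apply, Matrix.transpose_apply, L]
    rw [Pf_eq p i j i.2, Finset.sum_range]
    refine Finset.sum_congr rfl fun k _ => ?_
    by_cases hi : k ≤ i
    · by_cases hj : k ≤ j
      · have : (i : ℕ) + j - k = ((i : ℕ) - k) + k + (j - k) := by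
          have : (k : ℕ) ≤ i := hi
          have : (k : ℕ) ≤ j := hj
          omega
        rw [this]; push_cast; ring
      · have : (j : ℕ) < k := by simpa using hj
        simp [Nat.choose_eq_zero_of_lt this]
    · have : (i : ℕ) < k := by simpa using hi
      simp [Nat.choose_eq_zero_of_lt this]
  rw [h, Matrix.det_mul, Matrix.det_mul, Matrix.det_transpose, hL, Matrix.det_diagonal,
    Finset.prod_pow_eq_pow_sum]
  simp

lemma sum_odd (p : ℕ) : ∑ i : Fin p, (2 * (i : ℕ) + 1) = p ^ 2 := by
  induction p with
  | zero => simp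
  | succ n ih => rw [Fin.sum_univ_castSucc]; simp [ih]; ring

lemma det_Hf (p : ℕ) : (1 - PowerSeries.X) ^ (p ^ 2) *
    Matrix.det (Matrix.of fun i j : Fin p => Hf i j) =
    PowerSeries.X ^ (∑ i : Fin p, (i : ℕ)) := by
  rw [← det_Pf]
  have h : (Matrix.of fun i j : Fin p => Pf i j) =
    Matrix.diagonal (fun i : Fin p => (1 - PowerSeries.X) ^ ((i : ℕ) + 1)) *
    (Matrix.of fun i j : Fin p => Hf i j) *
    Matrix.diagonal (fun i : Fin p => (1 - PowerSeries.X) ^ (i : ℕ)) := by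
    ext1 i j
    simp only [Matrix.mul_diagonal, Matrix.diagonal_mul, Matrix.of_apply]
    rw [← Hf_Pf]; ring
  rw [h, Matrix.det_mul, Matrix.det_mul, Matrix.det_diagonal, Matrix.det_diagonal,
    Finset.prod_pow_eq_pow_sum, Finset.prod_pow_eq_pow_sum, ← sum_odd]
  have : ∑ i : Fin p, (2 * (i : ℕ) + 1) = ∑ i : Fin p, ((i : ℕ) + 1) + ∑ i : Fin p, (i : ℕ) := by
    rw [← Finset.sum_add_distrib]
    refine Finset.sum_congr rfl fun k _ => ?_
    ring
  rw [this]; ring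
def Vd {p : ℕ} (a : Fin p → ℕ) : ℤ := Matrix.det (Matrix.of fun i j : Fin p => ((a i).choose j : ℤ))

lemma det_dvd {R : Type*} [CommRing R] {p : ℕ} (x : R) (A B : Matrix (Fin p) (Fin p) R)
    (h : ∀ i j, x ∣ A i j - B i j) : x ∣ A.det - B.det := by
  rw [← Ideal.mem_span_singleton, ← Ideal.Quotient.eq, RingHom.map_det, RingHom.map_det]
  congr 1
  ext i j
  simp only [RingHom.mapMatrix_apply, Matrix.map_apply]
  rw [Ideal.Quotient.eq, Ideal.mem_span_singleton]
  exact h i j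

lemma cauchy_sum (p k M : ℕ) (hp : 1 ≤ p) (hM : k + ∑ i : Fin p, (i : ℕ) < M) :
    ∑ a ∈ (Fintype.piFinset (fun _ : Fin p => Finset.range M)).filter
      (fun a => StrictMono a ∧ ∑ i, a i = k + ∑ i : Fin p, (i : ℕ)), (Vd a) ^ 2 =
    ((p ^ 2 - 1 + k).choose k : ℤ) := by
  classical
  have cb := cauchy_binet (R := PowerSeries ℤ) (p := p) M (fun m j => ((m.choose j : ℕ) : PowerSeries ℤ))
    (fun m j => PowerSeries.X ^ m * ((m.choose j : ℕ) : PowerSeries ℤ))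
  have hV : ∀ a : Fin p → ℕ, Matrix.det (Matrix.of fun i j : Fin p =>
      (((a i).choose j : ℕ) : PowerSeries ℤ)) = PowerSeries.C (Vd a) := by
    intro a
    rw [Vd, RingHom.map_det]
    congr 1
  have hV2 : ∀ a : Fin p → ℕ, Matrix.det (Matrix.of fun i j : Fin p =>
      PowerSeries.X ^ (a i) * (((a i).choose j : ℕ) : PowerSeries ℤ)) =
      PowerSeries.X ^ (∑ i, a i) * PowerSeries.C (Vd a) := by
    intro a
    rw [← hV, ← Finset.prod_pow_eq_pow_sum, ← Matrix.det_mul_column]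
    rfl
  simp only [hV, hV2] at cb
  have hd := det_dvd (PowerSeries.X ^ M) (Matrix.of fun i j : Fin p => Hf i j)
    (Matrix.of fun i j => ∑ m ∈ Finset.range M,
      PowerSeries.X ^ m * ((m.choose i : ℕ) : PowerSeries ℤ) * ((m.choose j : ℕ) : PowerSeries ℤ)) (by
    intro i j
    rw [PowerSeries.X_pow_dvd_iff]
    intro m hm
    simp only [Matrix.of_apply, map_sub, map_sum]
    have : ∀ n : ℕ, PowerSeries.coeff m (PowerSeries.X ^ n * ((n.choose i : ℕ) : PowerSeries ℤ) *
        ((n.choose j : ℕ) : PowerSeries ℤ)) = if m = n then (n.choose i * n.choose j : ℤ) else 0 := by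
      intro n
      have : PowerSeries.X ^ n * ((n.choose i : ℕ) : PowerSeries ℤ) *
        ((n.choose j : ℕ) : PowerSeries ℤ) =
        PowerSeries.X ^ n * PowerSeries.C (n.choose i * n.choose j : ℤ) := by
        simp [mul_assoc]
      rw [this, PowerSeries.coeff_mul_C, PowerSeries.coeff_X_pow]
      split_ifs <;> simp
    simp only [this]
    rw [Finset.sum_ite_eq]
    simp [Hf, hm])
  rw [cb, PowerSeries.X_pow_dvd_iff] at hd
  have hd := hd _ hM
  rw [map_sub, sub_eq_zero] at hd
  have h1 : Matrix.det (Matrix.of fun i j : Fin p => Hf i j) =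
      PowerSeries.X ^ (∑ i : Fin p, (i : ℕ)) *
        PowerSeries.mk (fun n => ((p ^ 2 - 1 + n).choose (p ^ 2 - 1) : ℤ)) := by
    have h2 := PowerSeries.mk_add_choose_mul_one_sub_pow_eq_one (S := ℤ) (d := p ^ 2 - 1)
    have h3 := det_Hf p
    have hp2 : p ^ 2 - 1 + 1 = p ^ 2 := Nat.sub_add_cancel (Nat.one_le_pow _ _ hp)
    rw [hp2] at h2
    rw [← h3]
    linear_combination (-Matrix.det (Matrix.of fun i j : Fin p => Hf i j)) * h2
  rw [h1, PowerSeries.coeff_X_pow_mul, PowerSeries.coeff_mk, map_sum] at hd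
  rw [← Nat.choose_symm_add, hd, Finset.sum_filter, Finset.sum_filter]
  refine Finset.sum_congr rfl fun a _ => ?_
  have : PowerSeries.C (Vd a) * (PowerSeries.X ^ (∑ i, a i) * PowerSeries.C (Vd a)) =
    PowerSeries.X ^ (∑ i, a i) * PowerSeries.C (Vd a ^ 2) := by
    rw [pow_two, map_mul]; ring
  rw [this, PowerSeries.coeff_mul_C, PowerSeries.coeff_X_pow]
  by_cases h : StrictMono a
  · by_cases h' : ∑ i, a i = k + ∑ i : Fin p, (i : ℕ)
    · simp [h, h']
    · simp [h, h', Ne.symm h']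
  · simp [h]
lemma Vd_vander {p : ℕ} (a : Fin p → ℕ) :
    (∏ i : Fin p, (Nat.factorial i : ℤ)) * Vd a =
      ∏ i : Fin p, ∏ j ∈ Finset.Ioi i, ((a j : ℤ) - a i) := by
  rw [← Matrix.det_vandermonde,
    Matrix.det_eval_matrixOfPolynomials_eq_det_vandermonde (fun i => (a i : ℤ))
      (fun i => descPochhammer ℤ i)
      (fun i => descPochhammer_natDegree ℤ i)
      (fun i => monic_descPochhammer ℤ i), Vd, ← Matrix.det_mul_row]
  congr 1
  ext i j
  simp only [Matrix.of_apply]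
  rw [descPochhammer_eval_eq_descFactorial ℤ _ _, Nat.descFactorial_eq_factorial_mul_choose]
  push_cast; rfl

lemma Vd_shift {p : ℕ} (a : Fin p → ℕ) (N : ℕ) : Vd (fun i => a i + N) = Vd a := by
  have h1 := Vd_vander a
  have h2 := Vd_vander (fun i => a i + N)
  have h0 : (∏ i : Fin p, (Nat.factorial i : ℤ)) ≠ 0 :=
    Finset.prod_ne_zero_iff.2 fun i _ => by exact_mod_cast Nat.factorial_ne_zero _
  apply mul_left_cancel₀ h0
  rw [h1, h2]
  refine Finset.prod_congr rfl fun i _ => Finset.prod_congr rfl fun j _ => ?_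
  push_cast; ring

lemma sum_Ico_choose (a b j : ℕ) (h : a ≤ b) :
    ∑ m ∈ Finset.Ico a b, (m.choose j : ℤ) = (b.choose (j+1) : ℤ) - a.choose (j+1) := by
  induction b, h using Nat.le_induction with
  | base => simp
  | succ b h ih =>
    rw [Finset.sum_Ico_succ_top h, ih, Nat.choose_succ_succ]; push_cast; ring

lemma Vd_rec {q : ℕ} (a : Fin (q+1) → ℕ) (ha : Monotone a) :
    Vd a = ∑ m ∈ Fintype.piFinset (fun i : Fin q => Finset.Ico (a i.castSucc) (a i.succ)), Vd m := by
  have h1 : Matrix.det (Matrix.of fun i j : Fin q =>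
      ∑ m ∈ Finset.Ico (a i.castSucc) (a i.succ), (m.choose j : ℤ)) =
      ∑ m ∈ Fintype.piFinset (fun i : Fin q => Finset.Ico (a i.castSucc) (a i.succ)), Vd m := by
    have h2 : Matrix.det (Matrix.of fun i j : Fin q =>
      ∑ m ∈ Finset.Ico (a i.castSucc) (a i.succ), (m.choose j : ℤ)) =
      (Matrix.detRowAlternating (n := Fin q) (R := ℤ)).toMultilinearMap
        (fun i => ∑ m ∈ Finset.Ico (a i.castSucc) (a i.succ), fun j => (m.choose j : ℤ)) := by
      show Matrix.det _ = Matrix.det _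
      congr 1
      ext i j
      simp [Finset.sum_apply]
    rw [h2, MultilinearMap.map_sum_finset]
    rfl
  rw [← h1, Vd]
  rw [Matrix.det_eq_of_forall_row_eq_smul_add_pred
    (B := Matrix.of fun i j : Fin (q+1) => Fin.cases (motive := fun _ => ℤ) ((a 0).choose j : ℤ)
      (fun i : Fin q => ((a i.succ).choose j : ℤ) - ((a i.castSucc).choose j : ℤ)) i)
    (fun _ => 1)]
  · rw [Matrix.det_succ_column_zero, Fin.sum_univ_succ]
    simp only [Matrix.of_apply, Fin.cases_zero, Fin.cases_succ]
    simp
    congr 1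
    ext i j
    simp only [Matrix.submatrix_apply, Matrix.of_apply, Fin.cases_succ]
    rw [sum_Ico_choose _ _ _ (ha (Fin.castSucc_lt_succ).le)]
    simp
  · intro j; simp
  · intro i j; simp
def bseq (p : ℕ) (μ : YoungDiagram) (j : ℕ) : ℕ := μ.rowLen (p - 1 - j) + j

lemma bseq_lt (p : ℕ) (μ : YoungDiagram) {s j : ℕ} (h : s < j) : bseq p μ s < bseq p μ j := by
  unfold bseq
  have := μ.rowLen_anti (p-1-j) (p-1-s) (by omega)
  omega

lemma hook_row (p : ℕ) (μ : YoungDiagram) (h0 : μ.rowLen p = 0) (j : ℕ) (hj : j < p) :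
    (∏ t ∈ Finset.range (μ.rowLen (p-1-j)), hookLen μ (p-1-j, t)) *
      ∏ s ∈ Finset.range j, (bseq p μ j - bseq p μ s) = Nat.factorial (bseq p μ j) := by
  set i := p - 1 - j with hi
  set R := μ.rowLen i with hR
  have hcol : ∀ t, μ.colLen t ≤ p := by
    intro t
    by_contra h
    have : (p, t) ∈ μ := YoungDiagram.mem_iff_lt_colLen.2 (by omega)
    rw [YoungDiagram.mem_iff_lt_rowLen] at this
    omega
  have hcol2 : ∀ t, t < R → i < μ.colLen t := by
    intro t ht
    rw [← YoungDiagram.mem_iff_lt_colLen, YoungDiagram.mem_iff_lt_rowLen]; exact ht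
  have hcr : ∀ r t, t < μ.rowLen r ↔ r < μ.colLen t := by
    intro r t
    rw [← YoungDiagram.mem_iff_lt_colLen, YoungDiagram.mem_iff_lt_rowLen]
  have hb : bseq p μ j = R + j := rfl
  let φ : ℕ → ℕ := fun t => if t < R then hookLen μ (i, t) else bseq p μ j - bseq p μ (t - R)
  have hmap : ∀ t ∈ Finset.range (R + j), φ t ∈ Finset.Ico 1 (R + j + 1) := by
    intro t ht
    simp only [Finset.mem_range] at ht
    simp only [Finset.mem_Ico, φ]
    split_ifs with h
    · have := hcol t
      have := hcol2 t h
      simp only [hookLen]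
      omega
    · have := bseq_lt p μ (s := t - R) (j := j) (by omega)
      omega
  have hinj : Set.InjOn φ (Finset.range (R + j)) := by
    have key : ∀ t u, t < R → R ≤ u → u < R + j → φ t ≠ φ u := by
      intro t u ht hu hu' he
      simp only [φ, if_pos ht, if_neg (not_lt.2 hu), hookLen] at he
      have h1 := bseq_lt p μ (s := u - R) (j := j) (by omega)
      have h2 := hcol t
      have h3 := hcol2 t ht
      rw [hb] at he h1
      unfold bseq at he h1
      have h4 := hcr (p - 1 - (u - R)) t
      have h5 := μ.rowLen_anti i (p-1-(u-R)) (by omega)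
      rw [← hR] at he h5
      by_cases h6 : t < μ.rowLen (p - 1 - (u - R))
      · have := h4.1 h6
        omega
      · have := mt h4.2 h6
        omega
    have k1 : ∀ t u, t < u → u < R → φ t ≠ φ u := by
      intro t u htu hu he
      simp only [φ, if_pos hu, if_pos (htu.trans hu), hookLen] at he
      have := hcol2 t (htu.trans hu)
      have := hcol2 u hu
      have := μ.colLen_anti t u htu.le
      omega
    have k2 : ∀ t u, t < u → R ≤ t → u < R + j → φ t ≠ φ u := by
      intro t u htu ht hu he
      simp only [φ, if_neg (not_lt.2 ht), if_neg (not_lt.2 (ht.trans htu.le))] at he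
      have := bseq_lt p μ (s := t - R) (j := u - R) (by omega)
      have := bseq_lt p μ (s := u - R) (j := j) (by omega)
      omega
    have k3 : ∀ t u, t < u → u < R + j → φ t ≠ φ u := by
      intro t u htu hu
      by_cases h1 : u < R
      · exact k1 t u htu h1
      · by_cases h2 : t < R
        · exact key t u h2 (not_lt.1 h1) hu
        · exact k2 t u htu (not_lt.1 h2) hu
    intro t ht u hu he
    simp only [Finset.coe_range, Set.mem_Iio] at ht hu
    rcases lt_trichotomy t u with h | h | h
    · exact absurd he (k3 t u h hu)
    · exact h
    · exact absurd he.symm (k3 u t h ht)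
  have himg : (Finset.range (R + j)).image φ = Finset.Ico 1 (R + j + 1) := by
    apply Finset.eq_of_subset_of_card_le
    · intro x hx
      obtain ⟨t, ht, rfl⟩ := Finset.mem_image.1 hx
      exact hmap t ht
    · rw [Finset.card_image_of_injOn hinj]; simp
  have hprod : ∏ t ∈ Finset.range (R + j), φ t = Nat.factorial (R + j) := by
    rw [← Finset.prod_Ico_id_eq_factorial, ← himg, Finset.prod_image hinj]
  rw [hb, ← hprod, Finset.prod_range_add]
  congr 1
  · refine Finset.prod_congr rfl fun t ht => ?_
    simp only [φ, if_pos (Finset.mem_range.1 ht)]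
  · refine Finset.prod_congr rfl fun t ht => ?_
    simp [φ, hb]

lemma rowLen_zero_of_ge (p : ℕ) (μ : YoungDiagram) (h0 : μ.rowLen p = 0) (i : ℕ) (hi : p ≤ i) :
    μ.rowLen i = 0 := by
  have := μ.rowLen_anti p i hi; omega

lemma mem_cells_iff (p : ℕ) (μ : YoungDiagram) (h0 : μ.rowLen p = 0) (c : ℕ × ℕ) :
    c ∈ μ.cells ↔ c.1 ∈ Finset.range p ∧ c.2 ∈ Finset.range (μ.rowLen c.1) := by
  rw [YoungDiagram.mem_cells, show c = (c.1, c.2) from rfl, YoungDiagram.mem_iff_lt_rowLen]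
  simp only [Finset.mem_range]
  constructor
  · intro h
    refine ⟨?_, h⟩
    by_contra hc
    rw [rowLen_zero_of_ge p μ h0 _ (not_lt.1 hc)] at h
    omega
  · exact fun h => h.2

lemma card_eq_sum (p : ℕ) (μ : YoungDiagram) (h0 : μ.rowLen p = 0) :
    μ.card + ∑ i : Fin p, (i : ℕ) = ∑ i : Fin p, bseq p μ i := by
  have h : μ.card = ∑ i ∈ Finset.range p, μ.rowLen i := by
    rw [YoungDiagram.card, Finset.card_eq_sum_ones,
      Finset.sum_finset_product _ (Finset.range p) (fun i => Finset.range (μ.rowLen i)) (mem_cells_iff p μ h0)]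
    simp
  rw [h, ← Finset.sum_range_reflect]
  unfold bseq
  rw [Finset.sum_add_distrib, Finset.sum_range]

lemma hookProd_eq (p : ℕ) (μ : YoungDiagram) (h0 : μ.rowLen p = 0) :
    hookProd μ * ∏ j ∈ Finset.range p, ∏ s ∈ Finset.range j, (bseq p μ j - bseq p μ s) =
      ∏ j ∈ Finset.range p, Nat.factorial (bseq p μ j) := by
  rw [hookProd, Finset.prod_finset_product _ (Finset.range p) (fun i => Finset.range (μ.rowLen i)) (mem_cells_iff p μ h0),
    ← Finset.prod_range_reflect, ← Finset.prod_mul_distrib]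
  refine Finset.prod_congr rfl fun j hj => ?_
  exact hook_row p μ h0 j (Finset.mem_range.1 hj)

lemma hookProd_Vd (p : ℕ) (μ : YoungDiagram) (h0 : μ.rowLen p = 0) :
    (hookProd μ : ℤ) * ((∏ i : Fin p, (Nat.factorial i : ℤ)) * Vd (fun i : Fin p => bseq p μ i)) =
      ∏ j : Fin p, (Nat.factorial (bseq p μ j) : ℤ) := by
  rw [Vd_vander]
  have h := hookProd_eq p μ h0
  rw [Finset.prod_range, Finset.prod_range] at h
  have h2 : ∏ i : Fin p, ∏ j ∈ Finset.Ioi i, ((bseq p μ j : ℤ) - bseq p μ i) =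
      ((∏ i : Fin p, ∏ s ∈ Finset.range i, (bseq p μ i - bseq p μ s) : ℕ) : ℤ) := by
    rw [Finset.prod_comm' (t' := Finset.univ) (s' := fun j => Finset.Iio j) (by simp)]
    push_cast
    refine Finset.prod_congr rfl fun j _ => ?_
    have hm : (Finset.Iio j).map Fin.valEmbedding = Finset.range j := by
      ext x; simp
    rw [← hm, Finset.prod_map]
    refine Finset.prod_congr rfl fun i hi => ?_
    rw [Nat.cast_sub]
    · rfl
    · exact (bseq_lt p μ (by simpa using hi)).le
  rw [h2]
  exact_mod_cast h
def IsT (q : ℕ) (f : ℕ → ℕ) (T : ℕ → ℕ → ℕ) : Prop :=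
  (∀ i j1 j2, j1 < j2 → j2 < f i → T i j1 ≤ T i j2) ∧
  (∀ i1 i2 j, i1 < i2 → j < f i2 → T i1 j < T i2 j) ∧
  (∀ i j, f i ≤ j → T i j = 0) ∧ (∀ i j, j < f i → T i j < q)

def extT (q : ℕ) (g f : ℕ → ℕ) (T : ℕ → ℕ → ℕ) : ℕ → ℕ → ℕ := fun i j =>
  if j < g i then T i j else if j < f i then q else 0

lemma anti_of_step (f : ℕ → ℕ) (h : ∀ i, f (i+1) ≤ f i) {i j : ℕ} (hij : i ≤ j) : f j ≤ f i :=
  antitone_nat_of_succ_le h hij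

lemma extT_isT {q : ℕ} {g f : ℕ → ℕ} (h1 : ∀ i, f (i+1) ≤ g i) (h2 : ∀ i, g i ≤ f i)
    {T : ℕ → ℕ → ℕ} (hT : IsT q g T) : IsT (q+1) f (extT q g f T) := by
  obtain ⟨t1, t2, t3, t4⟩ := hT
  have hf : ∀ i j, i < j → f j ≤ g i := fun i j hij =>
    (anti_of_step f (fun i => (h1 i).trans (h2 i)) hij).trans (h1 i)
  refine ⟨?_, ?_, ?_, ?_⟩
  · intro i j1 j2 h hj
    unfold extT
    by_cases a : j2 < g i
    · rw [if_pos a, if_pos (h.trans a)]; exact t1 i j1 j2 h a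
    · rw [if_neg a, if_pos hj]
      split_ifs with b c
      · exact (t4 i j1 b).le
      · exact le_rfl
      · omega
  · intro i1 i2 j h hj
    have a : j < g i1 := lt_of_lt_of_le hj (hf i1 i2 h)
    unfold extT
    rw [if_pos a]
    split_ifs with b
    · exact t2 i1 i2 j h b
    · exact t4 _ _ a
  · intro i j h
    unfold extT
    rw [if_neg (by have := h2 i; omega), if_neg (by omega)]
  · intro i j h
    unfold extT
    split_ifs with b
    · have := t4 _ _ b; omega
    · omega

lemma extT_lt {q : ℕ} {g f : ℕ → ℕ} (h2 : ∀ i, g i ≤ f i)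
    {T : ℕ → ℕ → ℕ} (hT : IsT q g T) (i j : ℕ) :
    j < g i ↔ j < f i ∧ extT q g f T i j < q := by
  unfold extT
  constructor
  · intro h
    exact ⟨h.trans_le (h2 i), by rw [if_pos h]; exact hT.2.2.2 i j h⟩
  · rintro ⟨h, h'⟩
    by_contra hc
    rw [if_neg hc, if_pos h] at h'
    omega

lemma extT_inj {q : ℕ} {g g' f : ℕ → ℕ} (h2 : ∀ i, g i ≤ f i) (h2' : ∀ i, g' i ≤ f i)
    {T T' : ℕ → ℕ → ℕ} (hT : IsT q g T) (hT' : IsT q g' T') (h : extT q g f T = extT q g' f T') :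
    g = g' ∧ T = T' := by
  have hg : g = g' := by
    ext i
    refine eq_of_forall_lt_iff fun j => ?_
    rw [extT_lt h2 hT, extT_lt h2' hT', h]
  refine ⟨hg, ?_⟩
  subst hg
  ext i j
  by_cases hj : j < g i
  · have := congrFun (congrFun h i) j
    unfold extT at this
    rwa [if_pos hj, if_pos hj] at this
  · rw [hT.2.2.1 i j (by omega), hT'.2.2.1 i j (by omega)]

lemma isT_ge {q : ℕ} {f : ℕ → ℕ} (hf : ∀ i, f (i+1) ≤ f i) {T : ℕ → ℕ → ℕ} (hT : IsT q f T)
    (i j : ℕ) (h : j < f i) : i ≤ T i j := by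
  induction i with
  | zero => omega
  | succ i ih =>
    have := ih (h.trans_le (hf i))
    have := hT.2.1 i (i+1) j (by omega) h
    omega

lemma extT_surj {q : ℕ} {f : ℕ → ℕ} (hf : ∀ i, f (i+1) ≤ f i) 
    {T : ℕ → ℕ → ℕ} (hT : IsT (q+1) f T) :
    ∃ g : ℕ → ℕ, (∀ i, f (i+1) ≤ g i) ∧ (∀ i, g i ≤ f i) ∧ (∀ i, q ≤ i → g i = 0) ∧
      ∃ T', IsT q g T' ∧ extT q g f T' = T := by
  have hex : ∀ i, ∃ n, ∀ j, j < n ↔ (j < f i ∧ T i j < q) := by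
    intro i
    have hE : ∃ j, ¬ (j < f i ∧ T i j < q) := ⟨f i, by omega⟩
    classical
    refine ⟨Nat.find hE, fun j => ⟨fun h => ?_, fun h => ?_⟩⟩
    · exact not_not.1 (Nat.find_min hE h)
    · by_contra hc
      rw [not_lt] at hc
      apply Nat.find_spec hE
      rcases hc.eq_or_lt with hc | hc
      · rw [hc]; exact h
      · exact ⟨hc.trans h.1, (hT.1 i _ _ hc h.1).trans_lt h.2⟩
  choose g hg using hex
  have h2 : ∀ i, g i ≤ f i := by
    intro i; by_contra hc
    have := (hg i (f i)).1 (by omega)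
    omega
  have h1 : ∀ i, f (i+1) ≤ g i := by
    intro i
    by_contra hc
    have hc : g i < f (i+1) := by omega
    have a := hT.2.1 i (i+1) _ (by omega) hc
    have b := hT.2.2.2 (i+1) _ hc
    have := (hg i (g i)).2 ⟨hc.trans_le (hf i), by omega⟩
    omega
  have h3 : ∀ i j, i < j → g j ≤ g i := fun i j hij =>
    ((h2 j).trans (anti_of_step f hf hij)).trans (h1 i)
  refine ⟨g, h1, h2, ?_, fun i j => if j < g i then T i j else 0, ⟨?_, ?_, ?_, ?_⟩, ?_⟩
  · intro i hi
    by_contra hc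
    have h := (hg i 0).1 (by omega)
    have := isT_ge hf hT i 0 h.1
    omega
  · intro i j1 j2 h hj
    simp only [if_pos hj, if_pos (h.trans hj)]
    exact hT.1 i j1 j2 h (hj.trans_le (h2 i))
  · intro i1 i2 j h hj
    simp only [if_pos hj, if_pos (hj.trans_le (h3 i1 i2 h))]
    exact hT.2.1 i1 i2 j h (hj.trans_le (h2 i2))
  · intro i j h
    simp only [if_neg (not_lt.2 h)]
  · intro i j h
    simp only [if_pos h]
    exact ((hg i j).1 h).2
  · ext i j
    unfold extT
    by_cases a : j < g i
    · simp only [if_pos a]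
    · rw [if_neg a]
      split_ifs with b
      · have := hT.2.2.2 i j b
        have := mt (hg i j).2 a
        omega
      · exact (hT.2.2.1 i j (by omega)).symm

def rowf (q : ℕ) (a : Fin q → ℕ) (r : ℕ) : ℕ :=
  if h : r < q then a ⟨q - 1 - r, by omega⟩ - (q - 1 - r) else 0

lemma sm_ge {q : ℕ} {a : Fin q → ℕ} (ha : StrictMono a) (i : Fin q) : (i : ℕ) ≤ a i := by
  obtain ⟨i, hi⟩ := i
  induction i with
  | zero => simp
  | succ i ih =>
    have := ih (by omega)
    have h2 : a ⟨i, by omega⟩ < a ⟨i+1, hi⟩ := ha (by simp)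
    simp at this ⊢; omega

lemma rowf_eq {q : ℕ} {a : Fin q → ℕ} (ha : StrictMono a) (i : Fin q) :
    a i = rowf q a (q - 1 - i) + i := by
  have := sm_ge ha i
  unfold rowf
  rw [dif_pos (by omega)]
  have e : (⟨q - 1 - (q - 1 - (i:ℕ)), by omega⟩ : Fin q) = i := by ext; simp; omega
  rw [e]; omega

lemma rowf_anti {q : ℕ} {a : Fin q → ℕ} (ha : StrictMono a) (r : ℕ) :
    rowf q a (r + 1) ≤ rowf q a r := by
  by_cases h : r + 1 < q
  · have h1 := rowf_eq ha ⟨q - 1 - r, by omega⟩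
    have h2 := rowf_eq ha ⟨q - 1 - (r + 1), by omega⟩
    have h3 : a ⟨q - 1 - (r + 1), by omega⟩ < a ⟨q - 1 - r, by omega⟩ := ha (by simp; omega)
    simp only at h1 h2
    rw [show q - 1 - (q - 1 - r) = r by omega] at h1
    rw [show q - 1 - (q - 1 - (r + 1)) = r + 1 by omega] at h2
    omega
  · rw [rowf, dif_neg h]; omega

lemma interlace {q : ℕ} {a : Fin (q+1) → ℕ} (ha : StrictMono a) {m : Fin q → ℕ}
    (hm : m ∈ Fintype.piFinset (fun i : Fin q => Finset.Ico (a i.castSucc) (a i.succ))) :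
    StrictMono m ∧ (∀ i, rowf (q+1) a (i+1) ≤ rowf q m i) ∧
      (∀ i, rowf q m i ≤ rowf (q+1) a i) := by
  simp only [Fintype.mem_piFinset, Finset.mem_Ico] at hm
  have hs : StrictMono m := by
    intro i j hij
    have h1 := (hm i).2
    have h2 := (hm j).1
    have h3 : a i.succ ≤ a j.castSucc := ha.monotone (by rw [Fin.le_def]; simpa using hij)
    omega
  refine ⟨hs, ?_, ?_⟩
  · intro r
    by_cases h : r < q
    · have h1 := rowf_eq ha ⟨q - 1 - r, by omega⟩
      have h2 := rowf_eq hs ⟨q - 1 - r, by omega⟩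
      have h3 := (hm ⟨q - 1 - r, by omega⟩).1
      simp only [Fin.castSucc_mk] at h1 h2 h3
      rw [show q - 1 - (q - 1 - r) = r by omega] at h2
      rw [show q + 1 - 1 - (q - 1 - r) = r + 1 by omega] at h1
      omega
    · rw [rowf, dif_neg (by omega)]; omega
  · intro r
    by_cases h : r < q
    · have h1 := rowf_eq ha ⟨q - r, by omega⟩
      have h2 := rowf_eq hs ⟨q - 1 - r, by omega⟩
      have h3 := (hm ⟨q - 1 - r, by omega⟩).2
      simp only [Fin.succ_mk] at h1 h2 h3
      rw [show q - 1 - (q - 1 - r) = r by omega] at h2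
      rw [show q + 1 - 1 - (q - r) = r by omega] at h1
      simp only [show q - 1 - r + 1 = q - r by omega] at h3
      omega
    · rw [rowf, dif_neg (by omega)]; omega

lemma exists_tab (q : ℕ) : ∀ a : Fin q → ℕ, ∃ S : Finset (ℕ → ℕ → ℕ), StrictMono a →
    (∀ T, T ∈ S ↔ IsT q (rowf q a) T) ∧ (S.card : ℤ) = Vd a := by
  classical
  induction q with
  | zero =>
    intro a
    refine ⟨{fun _ _ => 0}, fun _ => ⟨fun T => ?_, by simp [Vd]⟩⟩
    rw [Finset.mem_singleton]
    constructor
    · rintro rfl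
      refine ⟨?_, ?_, ?_, ?_⟩ <;> simp [rowf]
    · intro h
      ext i j
      exact h.2.2.1 i j (by simp [rowf])
  | succ q ih =>
    choose S hS using ih
    intro a
    refine ⟨(Fintype.piFinset (fun i : Fin q => Finset.Ico (a i.castSucc) (a i.succ))).biUnion
      (fun m => (S m).image (extT q (rowf q m) (rowf (q+1) a))), fun ha => ⟨fun T => ?_, ?_⟩⟩
    · rw [Finset.mem_biUnion]
      constructor
      · rintro ⟨m, hm, hT⟩
        obtain ⟨hs, i1, i2⟩ := interlace ha hm
        obtain ⟨T', hT', rfl⟩ := Finset.mem_image.1 hT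
        exact extT_isT i1 i2 (((hS m hs).1 T').1 hT')
      · intro hT
        obtain ⟨g, g1, g2, g3, T', hT', rfl⟩ := extT_surj (rowf_anti ha) hT
        let m : Fin q → ℕ := fun i => g (q - 1 - i) + i
        have hm : m ∈ Fintype.piFinset (fun i : Fin q => Finset.Ico (a i.castSucc) (a i.succ)) := by
          simp only [Fintype.mem_piFinset, Finset.mem_Ico]
          intro i
          have e1 := rowf_eq ha i.castSucc
          have e2 := rowf_eq ha i.succ
          simp only [Fin.val_castSucc, Fin.val_succ] at e1 e2
          have f1 := g1 (q - 1 - i)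
          have f2 := g2 (q - 1 - i)
          rw [show q + 1 - 1 - (i : ℕ) = q - 1 - i + 1 by omega] at e1
          rw [show q + 1 - 1 - ((i : ℕ) + 1) = q - 1 - i by omega] at e2
          simp only [m]
          omega
        obtain ⟨hs, i1, i2⟩ := interlace ha hm
        have hg : rowf q m = g := by
          ext r
          unfold rowf
          split_ifs with h
          · simp only [m, Nat.add_sub_cancel]
            congr 1; omega
          · exact (g3 r (by omega)).symm
        refine ⟨m, hm, Finset.mem_image.2 ⟨T', ((hS m hs).1 T').2 (by rwa [hg]), by rw [hg]⟩⟩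
    · rw [Vd_rec a ha.monotone, Finset.card_biUnion]
      · push_cast
        refine Finset.sum_congr rfl fun m hm => ?_
        obtain ⟨hs, i1, i2⟩ := interlace ha hm
        rw [Finset.card_image_of_injOn, (hS m hs).2]
        intro T hT T' hT' h
        exact (extT_inj i2 i2 (((hS m hs).1 T).1 hT) (((hS m hs).1 T').1 hT') h).2
      · intro m hm m' hm' hne
        rw [Function.onFun, Finset.disjoint_left]
        rw [Finset.mem_coe] at hm hm'
        intro T h h'
        obtain ⟨hs, i1, i2⟩ := interlace ha hm
        obtain ⟨hs', i1', i2'⟩ := interlace ha hm'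
        obtain ⟨T1, hT1, rfl⟩ := Finset.mem_image.1 h
        obtain ⟨T2, hT2, h2⟩ := Finset.mem_image.1 h'
        apply hne
        have := (extT_inj i2 i2' (((hS m hs).1 T1).1 hT1) (((hS m' hs').1 T2).1 hT2) h2.symm).1
        ext i
        rw [rowf_eq hs, rowf_eq hs', this]

lemma isT_of_ssyt {μ : YoungDiagram} {q : ℕ} (T : SemistandardYoungTableau μ)
    (hT : ∀ c ∈ μ.cells, T c.1 c.2 < q) : IsT q μ.rowLen T := by
  refine ⟨?_, ?_, ?_, ?_⟩
  · intro i j1 j2 h hj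
    exact T.row_weak h (YoungDiagram.mem_iff_lt_rowLen.2 hj)
  · intro i j1 j2 h hj
    exact T.col_strict h (YoungDiagram.mem_iff_lt_rowLen.2 hj)
  · intro i j h
    exact T.zeros (fun hc => by rw [YoungDiagram.mem_iff_lt_rowLen] at hc; omega)
  · intro i j h
    exact hT (i, j) ((YoungDiagram.mem_cells _).2 (YoungDiagram.mem_iff_lt_rowLen.2 h))

lemma numSSYT_zero (μ : YoungDiagram) (q : ℕ) (h : μ.rowLen q ≠ 0) : numSSYT μ q = 0 := by
  unfold numSSYT
  convert Set.ncard_empty (SemistandardYoungTableau μ)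
  rw [Set.eq_empty_iff_forall_notMem]
  intro T hT
  have h1 := isT_of_ssyt T hT
  have := isT_ge (fun i => μ.rowLen_anti i (i+1) (by omega)) h1 q 0 (by omega)
  have := h1.2.2.2 q 0 (by omega)
  omega

lemma bseq_sm (p : ℕ) (μ : YoungDiagram) : StrictMono (fun i : Fin p => bseq p μ i) :=
  fun _ _ h => bseq_lt p μ h

lemma rowf_bseq (p : ℕ) (μ : YoungDiagram) (h0 : μ.rowLen p = 0) :
    rowf p (fun i : Fin p => bseq p μ i) = μ.rowLen := by
  ext r
  unfold rowf bseq
  split_ifs with h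
  · simp only [Nat.add_sub_cancel]
    congr 1; omega
  · exact (rowLen_zero_of_ge p μ h0 r (by omega)).symm

lemma numSSYT_Vd (μ : YoungDiagram) (q : ℕ) (h0 : μ.rowLen q = 0) :
    (numSSYT μ q : ℤ) = Vd (fun i : Fin q => bseq q μ i) := by
  obtain ⟨S, hS⟩ := exists_tab q (fun i : Fin q => bseq q μ i)
  obtain ⟨h1, h2⟩ := hS (bseq_sm q μ)
  rw [rowf_bseq q μ h0] at h1
  rw [← h2, numSSYT]
  have hinj : Function.Injective (fun T : SemistandardYoungTableau μ => (T : ℕ → ℕ → ℕ)) :=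
    DFunLike.coe_injective
  rw [← Set.ncard_image_of_injective _ hinj, ← Set.ncard_coe_finset S]
  congr 2
  ext T
  simp only [Set.mem_image, Set.mem_ofPred_eq, Finset.mem_coe, h1]
  constructor
  · rintro ⟨T, hT, rfl⟩
    exact isT_of_ssyt T hT
  · intro hT
    refine ⟨⟨T, ?_, ?_, ?_⟩, ?_, rfl⟩
    · intro i j1 j2 h hj
      exact hT.1 i j1 j2 h (YoungDiagram.mem_iff_lt_rowLen.1 hj)
    · intro i j1 j2 h hj
      exact hT.2.1 i j1 j2 h (YoungDiagram.mem_iff_lt_rowLen.1 hj)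
    · intro i j h
      exact hT.2.2.1 i j (by rw [YoungDiagram.mem_iff_lt_rowLen] at h; omega)
    · intro c hc
      exact hT.2.2.2 c.1 c.2 (YoungDiagram.mem_iff_lt_rowLen.1 ((YoungDiagram.mem_cells _).1 hc))
def ydOf (p : ℕ) (a : Fin p → ℕ) (ha : StrictMono a) : YoungDiagram where
  cells := (Finset.range p ×ˢ Finset.range (rowf p a 0)).filter (fun c => c.2 < rowf p a c.1)
  isLowerSet := by
    intro c d hdc hc
    simp only [Finset.coe_filter, Finset.mem_product, Finset.mem_range, Set.mem_ofPred_eq] at hc ⊢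
    have h1 : d.1 ≤ c.1 := hdc.1
    have h2 : d.2 ≤ c.2 := hdc.2
    have h3 := anti_of_step _ (rowf_anti ha) h1
    omega

lemma rowLen_ydOf {p : ℕ} (a : Fin p → ℕ) (ha : StrictMono a) (r : ℕ) :
    (ydOf p a ha).rowLen r = rowf p a r := by
  refine eq_of_forall_lt_iff fun j => ?_
  rw [← YoungDiagram.mem_iff_lt_rowLen, ← YoungDiagram.mem_cells]
  simp only [ydOf, Finset.mem_filter, Finset.mem_product, Finset.mem_range]
  constructor
  · exact fun h => h.2
  · intro h
    refine ⟨⟨?_, ?_⟩, h⟩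
    · by_contra hc
      rw [rowf, dif_neg hc] at h
      omega
    · exact h.trans_le (anti_of_step _ (rowf_anti ha) (Nat.zero_le r))

lemma bseq_ydOf {p : ℕ} (a : Fin p → ℕ) (ha : StrictMono a) (i : Fin p) :
    bseq p (ydOf p a ha) i = a i := by
  rw [bseq, rowLen_ydOf, ← rowf_eq ha]

lemma yd_ext {μ ν : YoungDiagram} (h : ∀ r, μ.rowLen r = ν.rowLen r) : μ = ν := by
  ext ⟨i, j⟩
  rw [YoungDiagram.mem_cells, YoungDiagram.mem_cells, YoungDiagram.mem_iff_lt_rowLen,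
    YoungDiagram.mem_iff_lt_rowLen, h]

def Aset (p k : ℕ) : Finset (Fin p → ℕ) :=
  (Fintype.piFinset (fun _ : Fin p => Finset.range (k + ∑ i : Fin p, (i : ℕ) + 1))).filter
      (fun a => StrictMono a ∧ ∑ i, a i = k + ∑ i : Fin p, (i : ℕ))

lemma sm_add {p : ℕ} {a : Fin p → ℕ} (ha : StrictMono a) (N : ℕ) : StrictMono (fun i => a i + N) :=
  fun _ _ h => Nat.add_lt_add_right (ha h) N

lemma Pword_eq {p : ℕ} (n : ℕ) (μ : YoungDiagram) (h0 : μ.rowLen p = 0) (hn : μ.card = n) :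
    Pword n p μ = (Nat.factorial n : ℝ) / (p : ℝ) ^ n *
      ((∏ i : Fin p, (Nat.factorial i : ℝ)) * (Vd (fun i : Fin p => bseq p μ i) : ℝ) ^ 2) /
        ∏ i : Fin p, (Nat.factorial (bseq p μ i) : ℝ) := by
  have h1 : ((hookProd μ : ℤ) * ((∏ i : Fin p, (Nat.factorial i : ℤ)) *
    Vd (fun i : Fin p => bseq p μ i)) : ℝ) =
      ∏ j : Fin p, (Nat.factorial (bseq p μ j) : ℝ) := by exact_mod_cast hookProd_Vd p μ h0
  have h2 : (numSSYT μ p : ℝ) = (Vd (fun i : Fin p => bseq p μ i) : ℝ) := by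
    exact_mod_cast numSSYT_Vd μ p h0
  have h3 : ∏ j : Fin p, (Nat.factorial (bseq p μ j) : ℝ) ≠ 0 :=
    Finset.prod_ne_zero_iff.2 fun i _ => by exact_mod_cast Nat.factorial_ne_zero _
  have h4 : (hookProd μ : ℝ) ≠ 0 := by
    intro h
    apply h3
    rw [← h1]; push_cast; rw [h]; simp
  rw [Pword, fSYT, hn, h2]
  push_cast at h1
  have h5 : 1 / (hookProd μ : ℝ) = ((∏ i : Fin p, (Nat.factorial i : ℝ)) *
    Vd (fun i : Fin p => bseq p μ i)) / ∏ j : Fin p, (Nat.factorial (bseq p μ j) : ℝ) := by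
    rw [div_eq_div_iff h4 h3, ← h1]; ring
  calc _ = (Nat.factorial n : ℝ) * (1 / (hookProd μ : ℝ)) *
      (Vd (fun i : Fin p => bseq p μ i) : ℝ) / (p : ℝ) ^ n := by ring
    _ = _ := by rw [h5]; ring

lemma tail_eq (p k N : ℕ) (hp : 1 ≤ p) :
    PwordTail (N * p + k) p N = ∑ a ∈ Aset p k,
      (Nat.factorial (N * p + k) : ℝ) / (p : ℝ) ^ (N * p + k) *
      ((∏ i : Fin p, (Nat.factorial i : ℝ)) * (Vd a : ℝ) ^ 2) /
        ∏ i : Fin p, (Nat.factorial (a i + N) : ℝ) := by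
  have hA : ∀ a ∈ Aset p k, StrictMono a ∧ ∑ i, a i = k + ∑ i : Fin p, (i : ℕ) :=
    fun a ha => (Finset.mem_filter.1 ha).2
  let e : {x // x ∈ Aset p k} → YoungDiagram := fun x =>
    ydOf p (fun i => x.1 i + N) (sm_add (hA x.1 x.2).1 N)
  have hb : ∀ x i, bseq p (e x) (i : Fin p) = x.1 i + N := fun x i => bseq_ydOf _ _ i
  have he0 : ∀ x, (e x).rowLen p = 0 := fun x => by
    simp only [e, rowLen_ydOf]; simp [rowf]
  have hinj : Function.Injective e := by
    intro x y h
    ext i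
    have h1 := hb x i
    have h2 := hb y i
    rw [h] at h1
    omega
  unfold PwordTail
  rw [← hinj.tsum_eq, tsum_fintype, ← Finset.sum_coe_sort (Aset p k)]
  · apply Finset.sum_congr rfl
    intro x _
    have hc : (e x).card = N * p + k := by
      have h1 := card_eq_sum p (e x) (he0 x)
      simp only [hb, Finset.sum_add_distrib, (hA x.1 x.2).2] at h1
      simp at h1
      rw [mul_comm]; omega
    have hr : N ≤ (e x).rowLen (p - 1) := by
      have := hb x ⟨0, hp⟩
      simp only [bseq, Nat.sub_zero, Nat.add_zero] at this
      omega
    rw [if_pos ⟨hc, hr⟩, Pword_eq _ _ (he0 x) hc]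
    simp only [hb, Vd_shift]
  · intro μ hμ
    rw [Function.mem_support] at hμ
    have hc : μ.card = N * p + k ∧ N ≤ μ.rowLen (p - 1) := by
      by_contra h; exact hμ (if_neg h)
    rw [if_pos hc] at hμ
    have h0 : μ.rowLen p = 0 := by
      by_contra h
      apply hμ
      rw [Pword, numSSYT_zero μ p h]; simp
    have hge : ∀ i : Fin p, N ≤ bseq p μ i := by
      intro i
      have := μ.rowLen_anti (p - 1 - i) (p - 1) (by omega)
      unfold bseq; omega
    have hs : StrictMono (fun i : Fin p => bseq p μ i - N) := by
      intro i j hij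
      have := bseq_sm p μ hij
      have := hge i
      simp only at *
      omega
    have hsum : ∑ i : Fin p, (bseq p μ i - N) = k + ∑ i : Fin p, (i : ℕ) := by
      have h1 := card_eq_sum p μ h0
      have h2 : ∑ i : Fin p, bseq p μ i = ∑ i : Fin p, (bseq p μ i - N) + N * p := by
        rw [show N * p = ∑ i : Fin p, N by simp [mul_comm], ← Finset.sum_add_distrib]
        refine Finset.sum_congr rfl fun i _ => ?_
        have := hge i; omega
      omega
    have hmem : (fun i : Fin p => bseq p μ i - N) ∈ Aset p k := by
      refine Finset.mem_filter.2 ⟨?_, hs, hsum⟩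
      rw [Fintype.mem_piFinset]
      intro i
      have := Finset.single_le_sum (f := fun i : Fin p => bseq p μ i - N)
        (fun _ _ => Nat.zero_le _) (Finset.mem_univ i)
      rw [hsum] at this
      rw [Finset.mem_range]; omega
    refine ⟨⟨_, hmem⟩, ?_⟩
    apply yd_ext
    intro r
    simp only [e, rowLen_ydOf]
    rw [← rowf_bseq p μ h0]
    congr 1
    ext i
    have := hge i; omega
lemma d1 (a : ℕ) : Tendsto (fun N : ℕ => (Nat.factorial (a + N) : ℝ) /
    ((Nat.factorial N : ℝ) * (N : ℝ) ^ a)) atTop (𝓝 1) := by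
  induction a with
  | zero =>
    refine tendsto_const_nhds.congr fun N => ?_
    have : (Nat.factorial N : ℝ) ≠ 0 := by exact_mod_cast Nat.factorial_ne_zero _
    simp [this]
  | succ a ih =>
    have h1 : Tendsto (fun N : ℕ => 1 + ((a : ℝ) + 1) / (N : ℝ)) atTop (𝓝 (1 + 0)) :=
      tendsto_const_nhds.add (tendsto_const_div_atTop_nhds_zero_nat _)
    have h2 := ih.mul h1
    rw [add_zero, mul_one] at h2
    refine h2.congr' ?_
    filter_upwards [eventually_gt_atTop 0] with N hN
    have hN' : (N : ℝ) ≠ 0 := by positivity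
    have : (Nat.factorial N : ℝ) ≠ 0 := by exact_mod_cast Nat.factorial_ne_zero _
    rw [show a + 1 + N = (a + N) + 1 by ring, Nat.factorial_succ]
    push_cast
    field_simp
    ring

lemma half_rpow (x : ℝ) (hx : 0 ≤ x) (n : ℕ) : x ^ ((((n + 1 : ℕ) : ℝ) - 1) / 2) = (√x) ^ n := by
  rw [Real.sqrt_eq_rpow, ← Real.rpow_natCast, ← Real.rpow_mul hx]
  congr 1
  push_cast; ring

lemma d3 (n : ℕ) : Tendsto (fun N : ℕ => (√(N : ℝ)) ^ n *
    ((Nat.factorial (N * (n + 1)) : ℝ) / (((n + 1 : ℕ) : ℝ) ^ (N * (n + 1)) *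
      (Nat.factorial N : ℝ) ^ (n + 1))))
    atTop (𝓝 (√((n + 1 : ℕ) : ℝ) / (√(2 * π)) ^ n)) := by
  have h1 := Stirling.tendsto_stirlingSeq_sqrt_pi
  have hmul : Tendsto (fun N : ℕ => N * (n + 1)) atTop atTop :=
    tendsto_id.atTop_mul_const' (by omega)
  have hpi : √π ≠ 0 := by positivity
  have h2 := ((h1.comp hmul).div (h1.pow (n + 1)) (pow_ne_zero _ hpi)).mul_const
    (√((n + 1 : ℕ) : ℝ) / √2 ^ n)
  have e : √π / √π ^ (n + 1) * (√((n + 1 : ℕ) : ℝ) / √2 ^ n) =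
      √((n + 1 : ℕ) : ℝ) / (√(2 * π)) ^ n := by
    rw [Real.sqrt_mul (by norm_num), mul_pow, pow_succ]
    field_simp
  rw [e] at h2
  refine h2.congr' ?_
  filter_upwards [eventually_gt_atTop 0] with N hN
  have hN' : (0 : ℝ) < N := by positivity
  have hf : (Nat.factorial N : ℝ) ≠ 0 := by exact_mod_cast Nat.factorial_ne_zero _
  have hn : (0 : ℝ) < ((n + 1 : ℕ) : ℝ) := by positivity
  have hs : √(2 * ((N * (n + 1) : ℕ) : ℝ)) = √2 * √(N : ℝ) * √((n + 1 : ℕ) : ℝ) := by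
    rw [Nat.cast_mul, ← mul_assoc, Real.sqrt_mul (by positivity), Real.sqrt_mul (by positivity)]
  have hs2 : √(2 * (N : ℝ)) = √2 * √(N : ℝ) := Real.sqrt_mul (by positivity) _
  have hp : ((((N * (n + 1) : ℕ) : ℝ)) / Real.exp 1) ^ (N * (n + 1)) =
      ((N : ℝ) / Real.exp 1) ^ (N * (n + 1)) * ((n + 1 : ℕ) : ℝ) ^ (N * (n + 1)) := by
    rw [← mul_pow, Nat.cast_mul]; congr 1; ring
  simp only [Pi.div_apply, Function.comp, Stirling.stirlingSeq]
  rw [hs, hs2, hp]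
  have hq : 0 < ((N : ℝ) / Real.exp 1) ^ N := by positivity
  rw [pow_mul ((N : ℝ) / Real.exp 1)]
  generalize ((N : ℝ) / Real.exp 1) ^ N = Q at hq
  have a1 : √(N : ℝ) ≠ 0 := by positivity
  have a2 : √((n + 1 : ℕ) : ℝ) ≠ 0 := by positivity
  have a3 : √(2 : ℝ) ≠ 0 := by positivity
  have a4 : ((n + 1 : ℕ) : ℝ) ^ (N * (n + 1)) ≠ 0 := by positivity
  generalize ((n + 1 : ℕ) : ℝ) ^ (N * (n + 1)) = W at a4 ⊢
  generalize √((n + 1 : ℕ) : ℝ) = U at a2 ⊢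
  generalize √(N : ℝ) = Y at a1 ⊢
  generalize √(2 : ℝ) = Z at a3 ⊢
  generalize (Nat.factorial N : ℝ) = G at hf ⊢
  rw [div_pow, mul_pow, mul_pow, pow_succ Z, pow_succ Y]
  have hQ : Q ≠ 0 := hq.ne'
  field_simp

lemma asym (p k : ℕ) (hp : 1 ≤ p) (a : Fin p → ℕ) (ha : ∑ i, a i = k + ∑ i : Fin p, (i : ℕ)) :
    Tendsto (fun N : ℕ => (N : ℝ) ^ (((p : ℝ) ^ 2 - 1) / 2) *
      ((Nat.factorial (N * p + k) : ℝ) / (p : ℝ) ^ (N * p + k) /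
        ∏ i : Fin p, (Nat.factorial (a i + N) : ℝ))) atTop
      (𝓝 (√(p : ℝ) / (2 * π) ^ (((p : ℝ) - 1) / 2))) := by
  obtain ⟨n, rfl⟩ : ∃ n, p = n + 1 := ⟨p - 1, by omega⟩
  have hmul : Tendsto (fun N : ℕ => N * (n + 1)) atTop atTop :=
    tendsto_id.atTop_mul_const' (by omega)
  have h1 := d3 n
  have h2 := (d1 k).comp hmul
  have h3 : Tendsto (fun N : ℕ => ∏ i : Fin (n+1), ((Nat.factorial (a i + N) : ℝ) /
    ((Nat.factorial N : ℝ) * (N : ℝ) ^ a i))) atTop (𝓝 (∏ i : Fin (n+1), 1)) :=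
    tendsto_finsetProd _ fun i _ => d1 (a i)
  rw [Finset.prod_const_one] at h3
  have h4 := (h1.mul h2).div h3 one_ne_zero
  rw [mul_one, div_one, ← half_rpow _ (by positivity)] at h4
  refine h4.congr' ?_
  filter_upwards [eventually_gt_atTop 0] with N hN
  have hN' : (0 : ℝ) < N := by positivity
  have hT : ((∑ i : Fin (n+1), (i : ℕ) : ℕ) : ℝ) * 2 = (n + 1) * n := by
    have := Finset.sum_range_id_mul_two (n+1)
    rw [Finset.sum_range] at this
    exact_mod_cast this
  have e1 : (N : ℝ) ^ ((((n + 1 : ℕ) : ℝ) ^ 2 - 1) / 2) =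
      √(N : ℝ) ^ n * (N : ℝ) ^ (∑ i : Fin (n+1), (i : ℕ)) := by
    rw [← half_rpow _ hN'.le, ← Real.rpow_natCast (N : ℝ) (∑ i : Fin (n+1), (i : ℕ)),
      ← Real.rpow_add hN']
    congr 1
    push_cast at hT ⊢
    linarith
  rw [e1]
  simp only [Pi.div_apply, Function.comp]
  rw [Finset.prod_div_distrib, Finset.prod_mul_distrib, Finset.prod_const,
    Finset.prod_pow_eq_pow_sum, ha, Finset.card_univ, Fintype.card_fin]
  have hf : (Nat.factorial N : ℝ) ≠ 0 := by exact_mod_cast Nat.factorial_ne_zero _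
  have hf2 : (Nat.factorial (N * (n + 1)) : ℝ) ≠ 0 := by exact_mod_cast Nat.factorial_ne_zero _
  have hf3 : ∏ i : Fin (n + 1), (Nat.factorial (a i + N) : ℝ) ≠ 0 :=
    Finset.prod_ne_zero_iff.2 fun i _ => by exact_mod_cast Nat.factorial_ne_zero _
  have hn : ((n + 1 : ℕ) : ℝ) ≠ 0 := by positivity
  rw [add_comm k (N * (n + 1)), pow_add (N : ℝ) k, pow_add (((n+1 : ℕ)) : ℝ) (N*(n+1)) k, Nat.cast_mul, mul_pow]
  have a4 : ((n + 1 : ℕ) : ℝ) ^ (N * (n + 1)) ≠ 0 := by positivity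
  have a5 : ((n + 1 : ℕ) : ℝ) ^ k ≠ 0 := by positivity
  generalize ((n + 1 : ℕ) : ℝ) ^ (N * (n + 1)) = W at a4 ⊢
  generalize ((n + 1 : ℕ) : ℝ) ^ k = W' at a5 ⊢
  generalize (∏ i : Fin (n + 1), (Nat.factorial (a i + N) : ℝ)) = V at hf3 ⊢
  generalize (Nat.factorial (N * (n + 1)) : ℝ) = V2 at hf2 ⊢
  field_simp
lemma rf_vander (x y : ℝ) (k : ℕ) :
    ∑ ij ∈ Finset.HasAntidiagonal.antidiagonal k, (k.choose ij.1 : ℝ) *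
      ((∏ i ∈ Finset.range ij.1, (x + i)) * ∏ i ∈ Finset.range ij.2, (y + i)) =
    ∏ i ∈ Finset.range k, (x + y + i) := by
  induction k with
  | zero => simp
  | succ k ih =>
    rw [Finset.sum_antidiagonal_choose_succ_mul (fun a b =>
      (∏ i ∈ Finset.range a, (x + i)) * ∏ i ∈ Finset.range b, (y + i)) k,
      Finset.prod_range_succ, ← ih, Finset.sum_mul, ← Finset.sum_add_distrib]
    refine Finset.sum_congr rfl fun ij hij => ?_
    have h := Finset.HasAntidiagonal.mem_antidiagonal.1 hij
    have h2 : k.choose ij.2 = k.choose ij.1 := by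
      rw [← h, Nat.choose_symm_add]
    have h3 : (k : ℝ) = ij.1 + ij.2 := by rw [← h]; push_cast; rfl
    simp only [Finset.prod_range_succ]
    rw [h2, h3]
    ring

lemma gauss_int (j : ℕ) : MeasureTheory.Integrable (fun x : ℝ => (x ^ 2 / 2) ^ j)
    (ProbabilityTheory.gaussianReal 0 1) := by
  have h := (ProbabilityTheory.memLp_id_gaussianReal' (μ := 0) (v := 1) ((2 * j : ℕ) : ENNReal)
    (ENNReal.natCast_ne_top _)).integrable_norm_pow'
  refine (h.div_const (2 ^ j)).congr (Filter.Eventually.of_forall fun x => ?_)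
  simp only [id, Real.norm_eq_abs]
  rw [pow_mul, sq_abs, div_pow]

lemma gauss_gamma (j : ℕ) : Real.Gamma ((j : ℝ) + 1 / 2) =
    √Real.pi * ∏ i ∈ Finset.range j, ((1 : ℝ) / 2 + i) := by
  induction j with
  | zero =>
    rw [Nat.cast_zero, zero_add, Real.Gamma_one_half_eq]; simp
  | succ j ih =>
    rw [show ((j + 1 : ℕ) : ℝ) + 1 / 2 = ((j : ℝ) + 1 / 2) + 1 by push_cast; ring,
      Real.Gamma_add_one (by positivity), ih, Finset.prod_range_succ]
    ring

lemma gauss_mom (j : ℕ) : ∫ x : ℝ, (x ^ 2 / 2) ^ j ∂(ProbabilityTheory.gaussianReal 0 1) =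
    ∏ i ∈ Finset.range j, ((1 : ℝ) / 2 + i) := by
  rw [ProbabilityTheory.integral_gaussianReal_eq_integral_smul one_ne_zero]
  have e : ∀ x : ℝ, ProbabilityTheory.gaussianPDFReal 0 1 x • (x ^ 2 / 2) ^ j =
      (fun y : ℝ => (√(2 * Real.pi))⁻¹ * (2 ^ j)⁻¹ *
        (y ^ ((2 * j : ℕ) : ℝ) * Real.exp (-(1 / 2) * y ^ (2 : ℝ)))) |x| := by
    intro x
    simp only [ProbabilityTheory.gaussianPDFReal, smul_eq_mul]
    rw [Real.rpow_natCast, Real.rpow_two, sq_abs, pow_mul, sq_abs, div_pow]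
    have : -(x - 0) ^ 2 / (2 * ((1 : NNReal) : ℝ)) = -(1 / 2) * x ^ 2 := by
      push_cast; ring
    rw [this]
    simp
    ring
  simp_rw [e]
  rw [integral_comp_abs (f := fun y : ℝ => (√(2 * Real.pi))⁻¹ * (2 ^ j)⁻¹ *
        (y ^ ((2 * j : ℕ) : ℝ) * Real.exp (-(1 / 2) * y ^ (2 : ℝ)))),
    MeasureTheory.integral_const_mul,
    integral_rpow_mul_exp_neg_mul_rpow (by norm_num)
      (lt_of_lt_of_le (by norm_num) (Nat.cast_nonneg _)) (by norm_num)]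
  rw [show ((((2 * j : ℕ) : ℝ)) + 1) / 2 = (j : ℝ) + 1 / 2 by push_cast; ring,
    show -((((2 * j : ℕ) : ℝ)) + 1) / 2 = -((j : ℝ) + 1 / 2) by push_cast; ring, gauss_gamma,
    one_div, Real.inv_rpow (by norm_num), Real.rpow_neg (by norm_num), inv_inv,
    Real.rpow_add (by norm_num), Real.rpow_natCast, ← one_div (2 : ℝ), ← Real.sqrt_eq_rpow,
    Real.sqrt_mul (by norm_num)]
  have h1 : √(2 : ℝ) ≠ 0 := by positivity
  have h2 : √Real.pi ≠ 0 := by positivity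
  field_simp

lemma chi_all (m : ℕ) : ∀ k : ℕ,
    MeasureTheory.Integrable (fun x : Fin m → ℝ => ((∑ i, x i ^ 2) / 2) ^ k)
      (MeasureTheory.Measure.pi fun _ : Fin m => ProbabilityTheory.gaussianReal 0 1) ∧
    chiHalfMoment m k = ∏ j ∈ Finset.range k, ((m : ℝ) / 2 + j) := by
  induction m with
  | zero =>
    intro k
    refine ⟨?_, ?_⟩
    · simp
    · unfold chiHalfMoment
      cases k with
      | zero => simp
      | succ k => simp [Finset.prod_range_succ']
  | succ m ih =>
    intro k
    have mp := MeasureTheory.measurePreserving_piFinSuccAbove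
      (fun _ : Fin (m + 1) => ProbabilityTheory.gaussianReal 0 1) 0
    let μ := ProbabilityTheory.gaussianReal 0 1
    let ν := MeasureTheory.Measure.pi fun _ : Fin m => ProbabilityTheory.gaussianReal 0 1
    let F : ℝ × (Fin m → ℝ) → ℝ := fun z => ∑ ij ∈ Finset.HasAntidiagonal.antidiagonal k, (k.choose ij.1 : ℝ) *
      ((z.1 ^ 2 / 2) ^ ij.1 * ((∑ i, z.2 i ^ 2) / 2) ^ ij.2)
    have hF : (fun x : Fin (m + 1) → ℝ => ((∑ i, x i ^ 2) / 2) ^ k) =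
        fun x => F (MeasurableEquiv.piFinSuccAbove (fun _ => ℝ) 0 x) := by
      funext x
      rw [Fin.sum_univ_succ, add_div, (Commute.all _ _).add_pow']
      simp [F, Fin.tail]
    have hI : ∀ ij : ℕ × ℕ, MeasureTheory.Integrable (fun z : ℝ × (Fin m → ℝ) =>
        (k.choose ij.1 : ℝ) * ((z.1 ^ 2 / 2) ^ ij.1 * ((∑ i, z.2 i ^ 2) / 2) ^ ij.2))
        (μ.prod ν) := fun ij =>
      ((gauss_int ij.1).mul_prod (ih ij.2).1).const_mul _
    have hFI : MeasureTheory.Integrable F (μ.prod ν) :=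
      MeasureTheory.integrable_finsetSum _ fun ij _ => hI ij
    refine ⟨?_, ?_⟩
    · rw [hF]
      exact mp.integrable_comp_of_integrable hFI
    · unfold chiHalfMoment
      rw [hF, mp.integral_comp' F]
      change ∫ z, F z ∂(μ.prod ν) = _
      rw [MeasureTheory.integral_finsetSum _ fun ij _ => hI ij]
      have : ((m + 1 : ℕ) : ℝ) / 2 = 1 / 2 + (m : ℝ) / 2 := by push_cast; ring
      rw [this, ← rf_vander]
      refine Finset.sum_congr rfl fun ij _ => ?_
      rw [MeasureTheory.integral_const_mul, MeasureTheory.integral_prod_mul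
        (fun x : ℝ => (x ^ 2 / 2) ^ ij.1) (fun y : Fin m → ℝ => ((∑ i, y i ^ 2) / 2) ^ ij.2),
        gauss_mom, ← (ih ij.2).2]
      rfl

lemma chi_choose (p k : ℕ) (hp : 1 ≤ p) : chiHalfMoment (2 * p ^ 2) k =
    (Nat.factorial k : ℝ) * (Nat.choose (p ^ 2 - 1 + k) k : ℝ) := by
  rw [(chi_all _ k).2]
  have h := Nat.ascFactorial_eq_factorial_mul_choose (p ^ 2 - 1) k
  have hp2 : p ^ 2 - 1 + 1 = p ^ 2 := Nat.sub_add_cancel (Nat.one_le_pow _ _ hp)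
  rw [hp2, Nat.ascFactorial_eq_prod_range] at h
  rw [← Nat.cast_mul, ← h]
  push_cast
  refine Finset.prod_congr rfl fun i _ => ?_
  ring
lemma final_lim (p k : ℕ) (hp : 1 ≤ p) : Filter.Tendsto
      (fun N : ℕ => (N : ℝ) ^ (((p : ℝ) ^ 2 - 1) / 2) * PwordTail (N * p + k) p N)
      Filter.atTop
      (nhds (Real.sqrt p * (∏ j ∈ Finset.Icc 1 p, (Nat.factorial (p - j) : ℝ)) /
          (2 * Real.pi) ^ (((p : ℝ) - 1) / 2) *
          (Nat.choose (p ^ 2 - 1 + k) k : ℝ))) := by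
  have hprod : ∏ j ∈ Finset.Icc 1 p, (Nat.factorial (p - j) : ℝ) =
      ∏ i : Fin p, (Nat.factorial i : ℝ) := by
    rw [← Finset.prod_range (fun i => (Nat.factorial i : ℝ)), ← Finset.prod_range_reflect,
      Finset.range_eq_Ico, ← Finset.Ico_add_one_right_eq_Icc,
      ← Finset.prod_Ico_add' (fun j => (Nat.factorial (p - j) : ℝ)) 0 p 1]
    refine Finset.prod_congr rfl fun i _ => ?_
    congr 2
    omega
  have hcs : ∑ a ∈ Aset p k, (Vd a : ℝ) ^ 2 = (Nat.choose (p ^ 2 - 1 + k) k : ℝ) := by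
    have := cauchy_sum p k (k + ∑ i : Fin p, (i : ℕ) + 1) hp (Nat.lt_succ_self _)
    exact_mod_cast congrArg (fun z : ℤ => (z : ℝ)) this
  have h : Tendsto (fun N : ℕ => ∑ a ∈ Aset p k,
      ((N : ℝ) ^ (((p : ℝ) ^ 2 - 1) / 2) *
      ((Nat.factorial (N * p + k) : ℝ) / (p : ℝ) ^ (N * p + k) /
        ∏ i : Fin p, (Nat.factorial (a i + N) : ℝ))) *
        ((∏ i : Fin p, (Nat.factorial i : ℝ)) * (Vd a : ℝ) ^ 2)) atTop
      (nhds (∑ a ∈ Aset p k, (√(p : ℝ) / (2 * π) ^ (((p : ℝ) - 1) / 2)) *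
        ((∏ i : Fin p, (Nat.factorial i : ℝ)) * (Vd a : ℝ) ^ 2))) := by
    refine tendsto_finsetSum _ fun a ha => ?_
    have ha' : ∑ i, a i = k + ∑ i : Fin p, (i : ℕ) := (Finset.mem_filter.1 ha).2.2
    exact (asym p k hp a ha').mul_const _
  rw [← Finset.mul_sum, ← Finset.mul_sum, hcs] at h
  rw [hprod]
  convert h using 2 with N
  · rw [tail_eq p k N hp, Finset.mul_sum]
    refine Finset.sum_congr rfl fun a _ => ?_
    ring
  · ring

/-- asymptotics of `P^{Np+k,p}(λ_p ≥ N)` as `N → ∞`, in terms of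
the `k`-th moment of `½ χ²_{2p²}`. -/
theorem statement3 (p k : ℕ) (hp : 1 ≤ p) :
    Filter.Tendsto
      (fun N : ℕ => (N : ℝ) ^ (((p : ℝ) ^ 2 - 1) / 2) * PwordTail (N * p + k) p N)
      Filter.atTop
      (nhds (Real.sqrt p * (∏ j ∈ Finset.Icc 1 p, (Nat.factorial (p - j) : ℝ)) /
        ((2 * Real.pi) ^ (((p : ℝ) - 1) / 2) * (Nat.factorial k : ℝ)) *
        chiHalfMoment (2 * p ^ 2) k)) ∧
    Asymptotics.IsEquivalent Filter.atTop
      (fun N : ℕ => PwordTail (N * p + k) p N)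
      (fun N : ℕ =>
        (Real.sqrt p * (∏ j ∈ Finset.Icc 1 p, (Nat.factorial (p - j) : ℝ)) /
          (2 * Real.pi) ^ (((p : ℝ) - 1) / 2) *
          (Nat.choose (p ^ 2 - 1 + k) k : ℝ)) *
        (N : ℝ) ^ (-(((p : ℝ) ^ 2 - 1) / 2))) := by
  have hL := final_lim p k hp
  have hc := chi_choose p k hp
  have hk : (Nat.factorial k : ℝ) ≠ 0 := by exact_mod_cast Nat.factorial_ne_zero _
  have hpi : (0 : ℝ) < (2 * Real.pi) ^ (((p : ℝ) - 1) / 2) := by positivity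
  refine ⟨?_, ?_⟩
  · convert hL using 2
    rw [hc]
    field_simp
  · have hp0 : (0 : ℝ) < p := by exact_mod_cast hp
    have hC : Real.sqrt p * (∏ j ∈ Finset.Icc 1 p, (Nat.factorial (p - j) : ℝ)) /
          (2 * Real.pi) ^ (((p : ℝ) - 1) / 2) *
          (Nat.choose (p ^ 2 - 1 + k) k : ℝ) ≠ 0 := by
      have h1 : (0 : ℝ) < Nat.choose (p ^ 2 - 1 + k) k := by
        exact_mod_cast Nat.choose_pos (Nat.le_add_left _ _)
      have h2 : (0 : ℝ) < ∏ j ∈ Finset.Icc 1 p, (Nat.factorial (p - j) : ℝ) :=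
        Finset.prod_pos fun j _ => by exact_mod_cast Nat.factorial_pos _
      positivity
    generalize Real.sqrt p * (∏ j ∈ Finset.Icc 1 p, (Nat.factorial (p - j) : ℝ)) /
          (2 * Real.pi) ^ (((p : ℝ) - 1) / 2) *
          (Nat.choose (p ^ 2 - 1 + k) k : ℝ) = C at hL hC ⊢
    apply Asymptotics.isEquivalent_of_tendsto_one
    have h3 := hL.div_const C
    rw [div_self hC] at h3
    refine h3.congr' ?_
    filter_upwards [eventually_gt_atTop 0] with N hN
    have hN' : (0 : ℝ) < N := by exact_mod_cast hN
    have hr : (0 : ℝ) < (N : ℝ) ^ (((p : ℝ) ^ 2 - 1) / 2) := by positivity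
    rw [Pi.div_apply, Real.rpow_neg hN'.le]
    field_simp


end
end
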